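/- arXiv:1011.5833 — 3 statements merged into one kernel-verified Lean document; each statement's English description precedes it below -/
import Mathlib

section
/- Let d ≥ 2 and n = d + 2. For every (α, λ) ∈ ℂ^{d−1} × ℂ and every j ∈ {0,…,n−1} there exists a nonzero solution y of the Schrödinger equation with parameters (α, λ) that is subdominant in the Stokes sector S_j. -/
open Complex Filter Topology

/-- The polynomial potential `P_α(z) = z^d + α_{d-1} z^{d-1} + ⋯ + α₁ z`. -/
noncomputable def Pol (d : ℕ) (α : Fin (d - 1) → ℂ) (z : ℂ) : ℂ :=
  z ^ d + ∑ i : Fin (d - 1), α i * z ^ ((i : ℕ) + 1)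

/-- `y` is an (entire) solution of the Schrödinger equation `y'' = (P_α - λ) y`. -/
def IsSol (d : ℕ) (α : Fin (d - 1) → ℂ) (lam : ℂ) (y : ℂ → ℂ) : Prop :=
  Differentiable ℂ y ∧ ∀ z : ℂ, deriv (deriv y) z = (Pol d α z - lam) * y z

/-- `θ` is a ray direction of the Stokes sector `S_j`. -/
def DirIn (n j : ℕ) (θ : ℝ) : Prop :=
  |θ - 2 * Real.pi * j / n| < Real.pi / n

/-- `y` is subdominant in the Stokes sector `S_j`: it tends to `0` along every ray in `S_j`. -/
def Subdominant (n j : ℕ) (y : ℂ → ℂ) : Prop :=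
  ∀ θ : ℝ, DirIn n j θ →
    Tendsto (fun r : ℝ => y ((r : ℂ) * Complex.exp (θ * Complex.I))) atTop (𝓝 0)

/-!
Rotating the plane, we may take the Stokes sector centred at the positive real axis. For a solution
of `y'' = q y`, the energy `Re (b ȳ y')` along the ray of direction `e = exp (θ I)` has derivative
`Re (b ē) |y'|² + Re (b e q) |y|²`. Once the origin is moved far out along the real axis, a suitable
phase `b` makes both coefficients at least a constant `c > 0` on all rays of a closed subsector
`|θ| ≤ Θ`; so the energy of every solution increases along these rays, and a solution whose energy
stays nonpositive on one of them decays exponentially there.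

To get such a solution for all rays at once, fix a basis `u`, `v` and let `L(z)` be the number for
which `v - L(z) u` satisfies the Robin condition `y' + y = 0` at `z`. At such a point the energy is
nonpositive, hence so it is on the whole segment from the origin to `z`. The numbers `L(z)` are
bounded, and `|L'|` is exponentially small because `u' + u` grows exponentially, so along a
sequence of radii `L(z)` has one limit `L` for all rays; `v - L u` has nonpositive energy on each.

The Wronskian of two solutions decaying in a sector tends to `0` and is constant, so the decaying
solutions in the various closed subsectors agree up to constant factors, and one solution decays on
every ray of the open sector.
-/

section PowerSeries

variable {a : ℕ → ℂ}

lemma summable_mul_pow_of_forall_bounded (ha : ∀ r : ℝ, 0 ≤ r → ∃ M, ∀ k, ‖a k‖ * r ^ k ≤ M)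
    (z : ℂ) : Summable fun k => a k * z ^ k := by
  obtain ⟨M, hM⟩ := ha (2 * ‖z‖) (by positivity)
  refine .of_norm_bounded (summable_geometric_two.mul_left M) fun k => ?_
  calc ‖a k * z ^ k‖ = ‖a k‖ * (2 * ‖z‖) ^ k * (1 / 2) ^ k := by
        rw [norm_mul, norm_pow, mul_assoc, ← mul_pow]; ring
    _ ≤ M * (1 / 2) ^ k := by gcongr; exact hM k

lemma norm_mul_pow_le_of_mem_ball (a : ℕ → ℂ) {R : ℝ} (k : ℕ) {w : ℂ}
    (hw : w ∈ Metric.ball (0 : ℂ) R) : ‖a k * w ^ k‖ ≤ ‖a k * (R : ℂ) ^ k‖ := by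
  have hwR : ‖w‖ ≤ ‖(R : ℂ)‖ := by
    simpa using (mem_ball_zero_iff.1 hw).le.trans (le_abs_self R)
  simp only [norm_mul, norm_pow]
  gcongr

lemma differentiable_tsum_mul_pow (ha : ∀ z : ℂ, Summable fun k => a k * z ^ k) :
    Differentiable ℂ fun z => ∑' k, a k * z ^ k := fun z =>
  (differentiableOn_tsum_of_summable_norm (ha ((‖z‖ + 1 : ℝ) : ℂ)).norm
    (fun k => by fun_prop) Metric.isOpen_ball fun k _ => norm_mul_pow_le_of_mem_ball a k)
    |>.differentiableAt (Metric.isOpen_ball.mem_nhds (by simp))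

lemma hasSum_deriv_tsum_mul_pow (ha : ∀ z : ℂ, Summable fun k => a k * z ^ k) (z : ℂ) :
    HasSum (fun k : ℕ => (k + 1) * a (k + 1) * z ^ k) (deriv (fun w => ∑' k, a k * w ^ k) z) := by
  have h := hasSum_deriv_of_summable_norm (z := z) (ha ((‖z‖ + 1 : ℝ) : ℂ)).norm
    (fun k => by fun_prop) Metric.isOpen_ball (fun k _ => norm_mul_pow_le_of_mem_ball a k)
    (by simp)
  have hterm : ∀ k, deriv (fun w : ℂ => a k * w ^ k) z = k * a k * z ^ (k - 1) := fun k => by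
    rw [((hasDerivAt_pow k z).const_mul (a k)).deriv]; ring
  simp only [hterm] at h
  simpa using (hasSum_nat_add_iff' 1).2 h

lemma hasSum_deriv_deriv_tsum_mul_pow (ha : ∀ z : ℂ, Summable fun k => a k * z ^ k) (z : ℂ) :
    HasSum (fun k : ℕ => (k + 1) * (k + 2) * a (k + 2) * z ^ k)
      (deriv (deriv fun w => ∑' k, a k * w ^ k) z) := by
  have hderiv : (deriv fun w => ∑' k, a k * w ^ k) =
      fun w => ∑' k : ℕ, (k + 1) * a (k + 1) * w ^ k :=
    funext fun w => (hasSum_deriv_tsum_mul_pow ha w).tsum_eq.symm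
  rw [hderiv]
  refine (hasSum_deriv_tsum_mul_pow
    (fun w => (hasSum_deriv_tsum_mul_pow ha w).summable) z).congr_fun ?_
  intro k
  push_cast
  ring

lemma tsum_mul_zero_pow (a : ℕ → ℂ) : ∑' k, a k * 0 ^ k = a 0 := by
  rw [tsum_eq_single 0 fun k hk => by simp [hk], pow_zero, mul_one]

end PowerSeries

section Existence

open Finset.HasAntidiagonal (antidiagonal mem_antidiagonal)

lemma exists_forall_le_of_convolution_bound {b γ : ℕ → ℝ} (hb : ∀ k, 0 ≤ b k)
    (hγ : ∀ k, 0 ≤ γ k) (hγs : Summable γ)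
    (h : ∀ m : ℕ, (m + 1) * (m + 2) * b (m + 2) ≤
      ∑ p ∈ antidiagonal m, γ p.1 * b p.2) :
    ∃ M, ∀ k, b k ≤ M := by
  obtain ⟨K, hK⟩ := exists_nat_ge (∑' i, γ i)
  set M : ℝ := ∑ i ∈ Finset.range (K + 2), b i
  have hM : 0 ≤ M := Finset.sum_nonneg fun i _ => hb i
  refine ⟨M, fun k => ?_⟩
  induction k using Nat.strong_induction_on with
  | _ k ih =>
    rcases lt_or_ge k (K + 2) with hk | hk
    · exact Finset.single_le_sum (fun i _ => hb i) (Finset.mem_range.2 hk)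
    · obtain ⟨m, rfl⟩ := Nat.exists_eq_add_of_le' (le_of_add_le_right hk)
      have hKm : (K : ℝ) ≤ m := by exact_mod_cast Nat.le_of_add_le_add_right hk
      have hstep : (m + 1) * (m + 2) * b (m + 2) ≤ (m + 1) * (m + 2) * M := calc
        _ ≤ ∑ p ∈ antidiagonal m, γ p.1 * b p.2 := h m
        _ ≤ ∑ p ∈ antidiagonal m, γ p.1 * M := by
            refine Finset.sum_le_sum fun p hp => mul_le_mul_of_nonneg_left (ih _ ?_) (hγ _)
            have := mem_antidiagonal.1 hp
            omega
        _ = (∑ i ∈ Finset.range (m + 1), γ i) * M := by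
            rw [← Finset.sum_mul, Finset.Nat.sum_antidiagonal_eq_sum_range_succ_mk]
        _ ≤ K * M := by
            gcongr
            exact (hγs.sum_le_tsum _ fun i _ => hγ i).trans hK
        _ ≤ (m + 1) * (m + 2) * M := by gcongr; nlinarith
      exact le_of_mul_le_mul_left hstep (by positivity)

/-- The Taylor coefficients at `0` of the solution of `y'' = q y`, `y 0 = A`, `y' 0 = B`, where
`c` are the Taylor coefficients of `q` at `0`. -/
noncomputable def solCoeff (c : ℕ → ℂ) (A B : ℂ) : ℕ → ℂ
  | 0 => A
  | 1 => B
  | k + 2 => (∑ i : Fin (k + 1), c i * solCoeff c A B (k - i)) / ((k + 1) * (k + 2))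
decreasing_by omega

lemma solCoeff_add_two (c : ℕ → ℂ) (A B : ℂ) (k : ℕ) :
    ((k : ℂ) + 1) * (k + 2) * solCoeff c A B (k + 2) =
      ∑ p ∈ antidiagonal k, c p.1 * solCoeff c A B p.2 := by
  have hk : ((k : ℂ) + 1) * (k + 2) ≠ 0 := by norm_cast
  rw [Finset.Nat.sum_antidiagonal_eq_sum_range_succ (fun i j => c i * solCoeff c A B j),
    Finset.sum_range, solCoeff, mul_div_cancel₀ _ hk]

lemma norm_solCoeff_mul_pow_le {c : ℕ → ℂ} (hc : ∀ z : ℂ, Summable fun k => c k * z ^ k)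
    (A B : ℂ) {r : ℝ} (hr : 0 ≤ r) : ∃ M, ∀ k, ‖solCoeff c A B k‖ * r ^ k ≤ M := by
  have hcr : Summable fun k => ‖c k‖ * r ^ k := by
    simpa [abs_of_nonneg hr] using (hc r).norm
  refine exists_forall_le_of_convolution_bound (γ := fun k => r ^ 2 * (‖c k‖ * r ^ k))
    (fun k => by positivity) (fun k => by positivity) (hcr.mul_left _) fun m => ?_
  have hm : ‖((m : ℂ) + 1) * (m + 2)‖ = (m + 1) * (m + 2) := by
    exact_mod_cast Complex.norm_natCast ((m + 1) * (m + 2))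
  calc (m + 1) * (m + 2) * (‖solCoeff c A B (m + 2)‖ * r ^ (m + 2))
      = ‖∑ p ∈ antidiagonal m, c p.1 * solCoeff c A B p.2‖ * r ^ (m + 2) := by
        rw [← solCoeff_add_two, norm_mul, hm]; ring
    _ ≤ (∑ p ∈ antidiagonal m, ‖c p.1 * solCoeff c A B p.2‖) * r ^ (m + 2) := by
        gcongr; exact norm_sum_le _ _
    _ = ∑ p ∈ antidiagonal m,
          r ^ 2 * (‖c p.1‖ * r ^ p.1) * (‖solCoeff c A B p.2‖ * r ^ p.2) := by
        rw [Finset.sum_mul]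
        refine Finset.sum_congr rfl fun p hp => ?_
        rw [← mem_antidiagonal.1 hp, norm_mul]; ring

lemma summable_solCoeff_mul_pow {c : ℕ → ℂ} (hc : ∀ z : ℂ, Summable fun k => c k * z ^ k)
    (A B z : ℂ) : Summable fun k => solCoeff c A B k * z ^ k :=
  summable_mul_pow_of_forall_bounded (fun _ hr => norm_solCoeff_mul_pow_le hc A B hr) z

/-- `y` is an entire solution of the linear differential equation `y'' = q y`. -/
def IsEntireSol (q y : ℂ → ℂ) : Prop :=
  Differentiable ℂ y ∧ ∀ z : ℂ, deriv (deriv y) z = q z * y z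

lemma isEntireSol_tsum_solCoeff {q : ℂ → ℂ} {c : ℕ → ℂ}
    (hc : ∀ z, HasSum (fun k => c k * z ^ k) (q z)) (A B : ℂ) :
    IsEntireSol q fun z => ∑' k, solCoeff c A B k * z ^ k := by
  have ha := summable_solCoeff_mul_pow (fun z => (hc z).summable) A B
  refine ⟨differentiable_tsum_mul_pow ha, fun z => ?_⟩
  rw [← (hasSum_deriv_deriv_tsum_mul_pow ha z).tsum_eq, ← (hc z).tsum_eq,
    tsum_mul_tsum_eq_tsum_sum_antidiagonal_of_summable_norm (hc z).summable.norm (ha z).norm]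
  refine tsum_congr fun k => ?_
  rw [solCoeff_add_two, Finset.sum_mul]
  refine Finset.sum_congr rfl fun p hp => ?_
  rw [← mem_antidiagonal.1 hp, pow_add]
  ring

lemma exists_isEntireSol_zero {q : ℂ → ℂ} (hq : Differentiable ℂ q) (A B : ℂ) :
    ∃ y, IsEntireSol q y ∧ y 0 = A ∧ deriv y 0 = B := by
  set c : ℕ → ℂ := fun k => (k.factorial : ℂ)⁻¹ * iteratedDeriv k q 0
  have hc : ∀ z, HasSum (fun k => c k * z ^ k) (q z) := fun z => by
    refine (Complex.hasSum_taylorSeries_of_entire hq 0 z).congr_fun fun k => ?_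
    simp only [c, sub_zero, smul_eq_mul]
    ring
  have hy := isEntireSol_tsum_solCoeff hc A B
  refine ⟨_, hy, ?_, ?_⟩
  · rw [tsum_mul_zero_pow, solCoeff]
  · have ha := summable_solCoeff_mul_pow (fun z => (hc z).summable) A B
    rw [← (hasSum_deriv_tsum_mul_pow ha 0).tsum_eq, tsum_mul_zero_pow]
    simp [solCoeff]

namespace IsEntireSol

variable {q u v y : ℂ → ℂ}

lemma hasDerivAt (hy : IsEntireSol q y) (z : ℂ) : HasDerivAt y (deriv y z) z :=
  (hy.1 z).hasDerivAt

lemma hasDerivAt_deriv (hy : IsEntireSol q y) (z : ℂ) : HasDerivAt (deriv y) (q z * y z) z := by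
  rw [← hy.2 z]
  exact (hy.1.contDiff.differentiable_deriv_two z).hasDerivAt

lemma of_hasDerivAt {y' : ℂ → ℂ} (h : ∀ z, HasDerivAt y (y' z) z)
    (h' : ∀ z, HasDerivAt y' (q z * y z) z) : IsEntireSol q y :=
  ⟨fun z => (h z).differentiableAt, fun z => by rw [deriv_eq h, (h' z).deriv]⟩

lemma sub_const_mul (hv : IsEntireSol q v) (hu : IsEntireSol q u) (L : ℂ) :
    IsEntireSol q fun z => v z - L * u z :=
  .of_hasDerivAt (fun z => (hv.hasDerivAt z).sub ((hu.hasDerivAt z).const_mul L)) fun z =>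
    ((hv.hasDerivAt_deriv z).sub ((hu.hasDerivAt_deriv z).const_mul L)).congr_deriv (by ring)

lemma deriv_sub_const_mul (hv : IsEntireSol q v) (hu : IsEntireSol q u) (L z : ℂ) :
    deriv (fun z => v z - L * u z) z = deriv v z - L * deriv u z :=
  ((hv.hasDerivAt z).sub ((hu.hasDerivAt z).const_mul L)).deriv

lemma comp_affine (hy : IsEntireSol q y) (a b : ℂ) :
    IsEntireSol (fun z => a ^ 2 * q (a * z + b)) fun z => y (a * z + b) := by
  have h : ∀ z, HasDerivAt (fun z => a * z + b) a z := fun z => by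
    simpa using ((hasDerivAt_id z).const_mul a).add_const b
  refine .of_hasDerivAt (y' := fun z => a * deriv y (a * z + b)) (fun z => ?_) fun z => ?_
  · exact ((hy.hasDerivAt _).comp z (h z)).congr_deriv (by ring)
  · exact (((hy.hasDerivAt_deriv _).comp z (h z)).const_mul a).congr_deriv (by ring)

lemma wronskian_eq (hu : IsEntireSol q u) (hv : IsEntireSol q v) (z w : ℂ) :
    u z * deriv v z - deriv u z * v z = u w * deriv v w - deriv u w * v w := by
  have h : ∀ z, HasDerivAt (fun z => u z * deriv v z - deriv u z * v z) 0 z := fun z =>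
    (((hu.hasDerivAt z).mul (hv.hasDerivAt_deriv z)).sub
      ((hu.hasDerivAt_deriv z).mul (hv.hasDerivAt z))).congr_deriv (by ring)
  exact is_const_of_deriv_eq_zero (fun z => (h z).differentiableAt) (fun z => (h z).deriv) z w

end IsEntireSol

lemma exists_isEntireSol {q : ℂ → ℂ} (hq : Differentiable ℂ q) (z₀ A B : ℂ) :
    ∃ y, IsEntireSol q y ∧ y z₀ = A ∧ deriv y z₀ = B := by
  obtain ⟨s, hs, hsA, hsB⟩ :=
    exists_isEntireSol_zero (hq.comp (differentiable_id.add_const z₀)) A B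
  refine ⟨fun z => s (z + -z₀), by simpa using hs.comp_affine 1 (-z₀), by simpa using hsA, ?_⟩
  rw [deriv_comp_add_const, add_neg_cancel, hsB]

namespace IsEntireSol

variable {q u v y : ℂ → ℂ}

lemma eq_zero_of_eq_zero_of_deriv_eq_zero (hq : Differentiable ℂ q) (hy : IsEntireSol q y)
    {p : ℂ} (h0 : y p = 0) (h1 : deriv y p = 0) : y = 0 := by
  funext z
  obtain ⟨s, hs, hs0, hs1⟩ := exists_isEntireSol hq z 0 1
  simpa [h0, h1, hs0, hs1] using hy.wronskian_eq hs z p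

lemma exists_eq_const_mul_of_wronskian_eq_zero (hq : Differentiable ℂ q) (hu : IsEntireSol q u)
    (hv : IsEntireSol q v) (hu0 : u ≠ 0) (hW : ∀ z, u z * deriv v z - deriv u z * v z = 0) :
    ∃ a : ℂ, ∀ z, v z = a * u z := by
  obtain ⟨p, hp⟩ : ∃ p, u p ≠ 0 := Function.ne_iff.1 hu0
  have hsub : (fun z => v z - v p / u p * u z) = 0 := by
    refine (hv.sub_const_mul hu _).eq_zero_of_eq_zero_of_deriv_eq_zero hq (p := p) ?_ ?_
    · field_simp; ring
    · rw [hv.deriv_sub_const_mul hu]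
      field_simp
      linear_combination hW p
  exact ⟨v p / u p, fun z => sub_eq_zero.1 (congrFun hsub z)⟩

end IsEntireSol

end Existence

section Sector

/-- The filter of neighbourhoods of `∞` in the closed sector `|arg z| ≤ Θ`; decay of an entire
function in a sector is `Tendsto y (sectorAtInfty Θ) (𝓝 0)`. -/
noncomputable def sectorAtInfty (Θ : ℝ) : Filter ℂ := Bornology.cobounded ℂ ⊓ 𝓟 {z | |arg z| ≤ Θ}

lemma monotone_sectorAtInfty : Monotone sectorAtInfty := fun _ _ h =>
  inf_le_inf_left _ (principal_mono.2 fun _ hz => le_trans hz h)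

lemma tendsto_mul_exp_sectorAtInfty {θ : ℝ} (hθ : |θ| < Real.pi) :
    Tendsto (fun r : ℝ => (r : ℂ) * exp (θ * I)) atTop (sectorAtInfty |θ|) := by
  refine tendsto_inf.2 ⟨tendsto_norm_atTop_iff_cobounded.1 ?_, tendsto_principal.2 ?_⟩
  · simpa using tendsto_abs_atTop_atTop
  · filter_upwards [eventually_gt_atTop 0] with r hr
    rw [exp_mul_I, arg_mul_cos_add_sin_mul_I hr ⟨(abs_lt.1 hθ).1, (abs_lt.1 hθ).2.le⟩]

lemma abs_arg_mul_le (z w : ℂ) : |arg (z * w)| ≤ |arg z| + |arg w| := by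
  rcases eq_or_ne z 0 with rfl | hz
  · simp
  rcases eq_or_ne w 0 with rfl | hw
  · simp
  rcases le_or_gt Real.pi (|arg z| + |arg w|) with hπ | hπ
  · exact (abs_arg_le_pi _).trans hπ
  · have hsum := abs_lt.1 ((abs_add_le (arg z) (arg w)).trans_lt hπ)
    rw [arg_mul hz hw ⟨hsum.1, hsum.2.le⟩]
    exact abs_add_le _ _

lemma tendsto_add_sectorAtInfty {Θ' Θ : ℝ} (h : Θ' < Θ) (r : ℝ) :
    Tendsto (fun p : ℂ × ℂ => p.1 + p.2) (sectorAtInfty Θ' ×ˢ 𝓟 (Metric.closedBall 0 r))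
      (sectorAtInfty Θ) := by
  set F := sectorAtInfty Θ' ×ˢ 𝓟 (Metric.closedBall (0 : ℂ) r)
  have hfst : Tendsto Prod.fst F (Bornology.cobounded ℂ) := tendsto_fst.mono_right inf_le_left
  have hsnd : ∀ᶠ p in F, ‖p.2‖ ≤ r := by
    filter_upwards [tendsto_snd.eventually (mem_principal_self _)] with p hp
    exact mem_closedBall_zero_iff.1 hp
  have harg : ∀ᶠ p in F, |arg p.1| ≤ Θ' :=
    tendsto_fst.eventually (eventually_inf_principal.2 (.of_forall fun _ hz => hz))
  have hnorm : Tendsto (fun p : ℂ × ℂ => ‖p.1‖) F atTop :=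
    tendsto_norm_cobounded_atTop.comp hfst
  have hquot : Tendsto (fun p : ℂ × ℂ => p.2 / p.1) F (𝓝 0) := by
    refine squeeze_zero_norm' ?_ (hnorm.const_div_atTop r)
    filter_upwards [hsnd] with p hp
    rw [norm_div]
    gcongr
  have hsmall : ∀ᶠ p in F, |arg (1 + p.2 / p.1)| < Θ - Θ' := by
    have h1 := ((continuousAt_arg one_mem_slitPlane).tendsto.comp
      (by simpa using hquot.const_add 1)).abs
    rw [arg_one, abs_zero] at h1
    exact h1.eventually_lt_const (sub_pos.2 h)
  refine tendsto_inf.2 ⟨tendsto_norm_atTop_iff_cobounded.1 ?_, tendsto_principal.2 ?_⟩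
  · refine tendsto_atTop_mono' F ?_ (tendsto_atTop_add_const_right F (-r) hnorm)
    filter_upwards [hsnd] with p hp
    linarith [norm_sub_le_norm_add p.1 p.2]
  · filter_upwards [harg, hsmall, hfst.eventually_ne_cobounded 0] with p hp hq hp0
    have hmul : p.1 + p.2 = p.1 * (1 + p.2 / p.1) := by field_simp
    rw [hmul]
    exact (abs_arg_mul_le _ _).trans (by linarith)

lemma tendsto_sectorAtInfty_of_translate {y : ℂ → ℂ} {l : Filter ℂ} {Θ' Θ : ℝ} (x : ℂ)
    (hy : Tendsto (fun z => y (z + x)) (sectorAtInfty Θ) l) (h : Θ' < Θ) :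
    Tendsto y (sectorAtInfty Θ') l := by
  have hpair : Tendsto (fun z : ℂ => (z, -x)) (sectorAtInfty Θ')
      (sectorAtInfty Θ' ×ˢ 𝓟 (Metric.closedBall 0 ‖x‖)) :=
    tendsto_id.prodMk (tendsto_principal.2 (.of_forall fun _ => by simp))
  simpa [Function.comp_def] using hy.comp ((tendsto_add_sectorAtInfty h ‖x‖).comp hpair)

lemma tendsto_deriv_sectorAtInfty {y : ℂ → ℂ} (hy : Differentiable ℂ y) {Θ' Θ : ℝ}
    (h : Θ' < Θ) (hlim : Tendsto y (sectorAtInfty Θ) (𝓝 0)) :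
    Tendsto (deriv y) (sectorAtInfty Θ') (𝓝 0) := by
  rw [Metric.tendsto_nhds] at hlim ⊢
  intro ε hε
  filter_upwards [eventually_prod_principal_iff.1
    ((tendsto_add_sectorAtInfty h 1).eventually (hlim (ε / 2) (half_pos hε)))] with z hz
  rw [dist_zero_right]
  refine lt_of_le_of_lt ?_ (half_lt_self hε)
  have hcauchy := norm_deriv_le_of_forall_mem_sphere_norm_le one_pos hy.diffContOnCl
    (c := z) (C := ε / 2) fun w hw => ?_
  · rwa [div_one] at hcauchy
  · have := hz (w - z) (by simpa [dist_eq_norm] using (mem_sphere_iff_norm.1 hw).le)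
    simpa using this.le

variable {q u v : ℂ → ℂ} {Θ : ℝ}

lemma IsEntireSol.wronskian_eq_zero_of_tendsto (hu : IsEntireSol q u) (hv : IsEntireSol q v)
    (hΘ : 0 < Θ) (hu0 : Tendsto u (sectorAtInfty Θ) (𝓝 0))
    (hv0 : Tendsto v (sectorAtInfty Θ) (𝓝 0)) (z : ℂ) :
    u z * deriv v z - deriv u z * v z = 0 := by
  have hu1 := tendsto_deriv_sectorAtInfty hu.1 hΘ hu0
  have hv1 := tendsto_deriv_sectorAtInfty hv.1 hΘ hv0
  have hmono := monotone_sectorAtInfty hΘ.le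
  have hW := ((hu0.mono_left hmono).mul hv1).sub (hu1.mul (hv0.mono_left hmono))
  have haxis := tendsto_mul_exp_sectorAtInfty (θ := 0) (by simpa using Real.pi_pos)
  rw [abs_zero] at haxis
  simp only [hu.wronskian_eq hv _ z, mul_zero, sub_zero] at hW
  exact tendsto_nhds_unique tendsto_const_nhds (hW.comp haxis)

lemma IsEntireSol.exists_eq_const_mul_of_tendsto (hq : Differentiable ℂ q)
    (hu : IsEntireSol q u) (hv : IsEntireSol q v) (hu_ne : u ≠ 0) (hΘ : 0 < Θ)
    (hu0 : Tendsto u (sectorAtInfty Θ) (𝓝 0)) (hv0 : Tendsto v (sectorAtInfty Θ) (𝓝 0)) :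
    ∃ a : ℂ, ∀ z, v z = a * u z :=
  exists_eq_const_mul_of_wronskian_eq_zero hq hu hv hu_ne
    (hu.wronskian_eq_zero_of_tendsto hv hΘ hu0 hv0)

end Sector

section RayEnergy

open ComplexConjugate

/-- The energy `Re (b ȳ y')` of `y` at the point `t e` of the ray of direction `e`; the weight `b`
is to be chosen so that the energy of a solution increases along the ray. -/
noncomputable def rayEnergy (b e : ℂ) (y : ℂ → ℂ) (t : ℝ) : ℝ :=
  (b * conj (y (t * e)) * deriv y (t * e)).re

lemma hasDerivAt_comp_ofReal_mul {f : ℂ → ℂ} {f' e : ℂ} {t : ℝ}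
    (h : HasDerivAt f f' (t * e)) : HasDerivAt (fun t : ℝ => f (t * e)) (e * f') t := by
  have hray : HasDerivAt (fun t : ℝ => (t : ℂ) * e) e t := by
    simpa using (ofRealCLM.hasDerivAt (x := t)).mul_const e
  exact (h.comp t hray).congr_deriv (mul_comm _ _)

lemma hasDerivAt_re {f : ℝ → ℂ} {f' : ℂ} {t : ℝ} (h : HasDerivAt f f' t) :
    HasDerivAt (fun t => (f t).re) f'.re t :=
  reCLM.hasFDerivAt.comp_hasDerivAt t h

lemma monotoneOn_Ici_of_hasDerivAt_nonneg {f f' : ℝ → ℝ} {a : ℝ}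
    (hf : ∀ t, HasDerivAt f (f' t) t) (hf' : ∀ t, a ≤ t → 0 ≤ f' t) :
    MonotoneOn f (Set.Ici a) :=
  monotoneOn_of_hasDerivWithinAt_nonneg (convex_Ici a)
    (fun t _ => (hf t).continuousAt.continuousWithinAt)
    (fun t _ => (hf t).hasDerivWithinAt) fun t ht => hf' t (interior_subset ht)

variable {q y : ℂ → ℂ} {b e : ℂ} {c t : ℝ}

lemma hasDerivAt_rayEnergy (hy : IsEntireSol q y) (b e : ℂ) (t : ℝ) :
    HasDerivAt (rayEnergy b e y) ((b * conj e).re * ‖deriv y (t * e)‖ ^ 2 +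
      (b * e * q (t * e)).re * ‖y (t * e)‖ ^ 2) t := by
  have hy0 := hasDerivAt_comp_ofReal_mul (hy.hasDerivAt (t * e))
  have hy1 := hasDerivAt_comp_ofReal_mul (hy.hasDerivAt_deriv (t * e))
  refine (hasDerivAt_re ((hy0.star.const_mul b).mul hy1)).congr_deriv ?_
  rw [star_def, ← re_mul_ofReal, ← re_mul_ofReal, ← add_re, ofReal_pow, ofReal_pow, ← conj_mul',
    ← conj_mul', map_mul]
  congr 1
  ring

lemma abs_rayEnergy_le (hb : ‖b‖ = 1) (e : ℂ) (y : ℂ → ℂ) (t : ℝ) :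
    |rayEnergy b e y t| ≤ ‖y (t * e)‖ * ‖deriv y (t * e)‖ := by
  refine (abs_re_le_norm _).trans_eq ?_
  rw [norm_mul, norm_mul, hb, RCLike.norm_conj, one_mul]

/-- The inequalities which make the energy `rayEnergy b e y` of every solution `y` of `y'' = q y`
grow along the ray of direction `e`, at rate at least `2 c`. The bound on `b.re` controls the
energy of solutions at a point where `y' + y = 0`. -/
structure RayCoercive (q : ℂ → ℂ) (b e : ℂ) (c : ℝ) : Prop where
  pos : 0 < c
  norm_weight : ‖b‖ = 1
  norm_direction : ‖e‖ = 1
  le_re_weight : c ≤ b.re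
  le_re_mul_conj : c ≤ (b * conj e).re
  le_re_mul : ∀ t : ℝ, 0 ≤ t → c ≤ (b * e * q (t * e)).re

namespace RayCoercive

lemma mul_norm_sq_add_le_deriv (H : RayCoercive q b e c) (hy : IsEntireSol q y) (ht : 0 ≤ t) :
    c * (‖deriv y (t * e)‖ ^ 2 + ‖y (t * e)‖ ^ 2) ≤ deriv (rayEnergy b e y) t := by
  rw [(hasDerivAt_rayEnergy hy b e t).deriv, mul_add]
  gcongr
  · exact H.le_re_mul_conj
  · exact H.le_re_mul t ht

lemma two_mul_abs_le_deriv (H : RayCoercive q b e c) (hy : IsEntireSol q y) (ht : 0 ≤ t) :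
    2 * c * |rayEnergy b e y t| ≤ deriv (rayEnergy b e y) t := by
  refine le_trans ?_ (H.mul_norm_sq_add_le_deriv hy ht)
  have hE := abs_rayEnergy_le H.norm_weight e y t
  nlinarith [two_mul_le_add_sq ‖deriv y (t * e)‖ ‖y (t * e)‖, H.pos]

lemma monotoneOn_mul_exp (H : RayCoercive q b e c) (hy : IsEntireSol q y) {κ : ℝ}
    (hκ : |κ| ≤ 2 * c) :
    MonotoneOn (fun t => rayEnergy b e y t * Real.exp (κ * t)) (Set.Ici 0) := by
  have hd : ∀ t, HasDerivAt (fun t => rayEnergy b e y t * Real.exp (κ * t))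
      ((deriv (rayEnergy b e y) t + κ * rayEnergy b e y t) * Real.exp (κ * t)) t := fun t =>
    ((hasDerivAt_rayEnergy hy b e t).differentiableAt.hasDerivAt.mul
      ((hasDerivAt_id t).const_mul κ).exp).congr_deriv (by simp only [id]; ring)
  refine monotoneOn_Ici_of_hasDerivAt_nonneg hd fun t ht => mul_nonneg ?_ (Real.exp_pos _).le
  have hκE : |κ * rayEnergy b e y t| ≤ 2 * c * |rayEnergy b e y t| := by
    rw [abs_mul]; gcongr
  linarith [H.two_mul_abs_le_deriv hy ht, neg_abs_le (κ * rayEnergy b e y t)]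

lemma monotoneOn (H : RayCoercive q b e c) (hy : IsEntireSol q y) :
    MonotoneOn (rayEnergy b e y) (Set.Ici 0) := by
  simpa using H.monotoneOn_mul_exp hy (κ := 0) (by simpa using H.pos.le)

lemma monotoneOn_add_norm_sq (H : RayCoercive q b e c) (hy : IsEntireSol q y) :
    MonotoneOn (fun t => rayEnergy b e y t + c * ‖y (t * e)‖ ^ 2) (Set.Ici 0) := by
  refine monotoneOn_Ici_of_hasDerivAt_nonneg (fun t =>
    (hasDerivAt_rayEnergy hy b e t).differentiableAt.hasDerivAt.add
      ((hasDerivAt_comp_ofReal_mul (hy.hasDerivAt (t * e))).norm_sq.const_mul c)) fun t ht => ?_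
  have hinner := abs_real_inner_le_norm (y (t * e)) (e * deriv y (t * e))
  rw [norm_mul, H.norm_direction, one_mul] at hinner
  nlinarith [H.mul_norm_sq_add_le_deriv hy ht, neg_le_of_abs_le hinner, H.pos,
    two_mul_le_add_sq ‖deriv y (t * e)‖ ‖y (t * e)‖]

-- Otherwise the energy would grow at least linearly, hence become positive.
lemma mul_norm_sq_le_neg_rayEnergy (H : RayCoercive q b e c) (hy : IsEntireSol q y)
    (hE : ∀ t, 0 ≤ t → rayEnergy b e y t ≤ 0) (ht : 0 ≤ t) :
    c * ‖y (t * e)‖ ^ 2 ≤ -rayEnergy b e y t := by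
  by_contra! hlt
  set δ : ℝ := rayEnergy b e y t + c * ‖y (t * e)‖ ^ 2
  have hδ : 0 < δ := by linarith
  have hd := fun s => (hasDerivAt_rayEnergy hy b e s).differentiableAt
  have hδ_le : ∀ s ∈ interior (Set.Ici t), δ ≤ deriv (rayEnergy b e y) s := fun s hs => by
    have hts : t ≤ s := interior_subset hs
    have hs0 : 0 ≤ s := ht.trans hts
    have hδs : δ ≤ rayEnergy b e y s + c * ‖y (s * e)‖ ^ 2 :=
      H.monotoneOn_add_norm_sq hy ht hs0 hts
    have hy's := mul_nonneg H.pos.le (sq_nonneg ‖deriv y (s * e)‖)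
    linarith [hE s hs0, H.mul_norm_sq_add_le_deriv hy hs0]
  set s : ℝ := t + (1 - rayEnergy b e y t) / δ with hs
  have hts : t ≤ s :=
    le_add_of_nonneg_right (div_nonneg (by linarith [hE t ht]) hδ.le)
  have hgrow : δ * (s - t) ≤ rayEnergy b e y s - rayEnergy b e y t :=
    (convex_Ici t).mul_sub_le_image_sub_of_le_deriv
      (fun s _ => (hd s).continuousAt.continuousWithinAt)
      (fun s _ => (hd s).differentiableWithinAt) hδ_le t Set.self_mem_Ici s hts hts
  rw [hs, add_sub_cancel_left, mul_div_cancel₀ _ hδ.ne'] at hgrow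
  linarith [hE s (ht.trans hts)]

lemma mul_norm_sq_le_mul_exp (H : RayCoercive q b e c) (hy : IsEntireSol q y)
    (hE : ∀ t, 0 ≤ t → rayEnergy b e y t ≤ 0) (ht : 0 ≤ t) :
    c * ‖y (t * e)‖ ^ 2 ≤ ‖y 0‖ * ‖deriv y 0‖ * Real.exp (-(2 * c * t)) := by
  refine (H.mul_norm_sq_le_neg_rayEnergy hy hE ht).trans ?_
  have hmono := H.monotoneOn_mul_exp hy (abs_of_pos (mul_pos two_pos H.pos)).le
    Set.self_mem_Ici ht ht
  have h0 := neg_le_of_abs_le (abs_rayEnergy_le H.norm_weight e y 0)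
  simp only [ofReal_zero, zero_mul, mul_zero, Real.exp_zero, mul_one] at hmono h0
  rw [Real.exp_neg, ← div_eq_mul_inv, le_div_iff₀ (Real.exp_pos _)]
  linarith

end RayCoercive

end RayEnergy

section Robin

open ComplexConjugate

/-- The boundary value `y' + y` of the Robin condition `y' + y = 0` at `z`. -/
noncomputable def robinTrace (y : ℂ → ℂ) (z : ℂ) : ℂ := deriv y z + y z

/-- The coefficient `L` for which `v - L u` satisfies the Robin condition `y' + y = 0` at `z`. -/
noncomputable def robinQuot (u v : ℂ → ℂ) (z : ℂ) : ℂ := robinTrace v z / robinTrace u z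

lemma mul_re_mul_conj_mul_le {b p s : ℂ} {c : ℝ} (hb : ‖b‖ = 1) (hc0 : 0 ≤ c) (hc : c ≤ b.re) :
    c * (b * conj p * s).re ≤ ‖s + p‖ ^ 2 := by
  have hsplit : (b * conj p * (s + p)).re = b.re * ‖p‖ ^ 2 + (b * conj p * s).re := by
    rw [← re_mul_ofReal, ofReal_pow, ← conj_mul', ← add_re]
    congr 1
    ring
  have hle := re_le_norm (b * conj p * (s + p))
  rw [norm_mul, norm_mul, hb, RCLike.norm_conj, one_mul, hsplit] at hle
  have hE : (b * conj p * s).re ≤ ‖p‖ * ‖s + p‖ - c * ‖p‖ ^ 2 := by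
    linarith [mul_le_mul_of_nonneg_right hc (sq_nonneg ‖p‖)]
  nlinarith [mul_le_mul_of_nonneg_left hE hc0, sq_nonneg (‖s + p‖ - c * ‖p‖ / 2),
    sq_nonneg (c * ‖p‖)]

variable {q u v y : ℂ → ℂ} {b e : ℂ} {c t : ℝ}

lemma hasDerivAt_robinTrace (hy : IsEntireSol q y) (z : ℂ) :
    HasDerivAt (robinTrace y) (q z * y z + deriv y z) z :=
  (hy.hasDerivAt_deriv z).add (hy.hasDerivAt z)

lemma hasDerivAt_robinQuot (hu : IsEntireSol q u) (hv : IsEntireSol q v) {z : ℂ}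
    (hz : robinTrace u z ≠ 0) :
    HasDerivAt (robinQuot u v)
      ((1 - q z) * (u z * deriv v z - deriv u z * v z) / robinTrace u z ^ 2) z :=
  ((hasDerivAt_robinTrace hv z).div (hasDerivAt_robinTrace hu z) hz).congr_deriv
    (by congr 1; simp only [robinTrace]; ring)

lemma robinTrace_sub_robinQuot_mul (hu : IsEntireSol q u) (hv : IsEntireSol q v) {z : ℂ}
    (hz : robinTrace u z ≠ 0) : robinTrace (fun w => v w - robinQuot u v z * u w) z = 0 := by
  have hL : robinQuot u v z * robinTrace u z = robinTrace v z := div_mul_cancel₀ _ hz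
  simp only [robinTrace, hv.deriv_sub_const_mul hu] at hL ⊢
  linear_combination -hL

namespace RayCoercive

lemma rayEnergy_nonpos_of_robinTrace_eq_zero (H : RayCoercive q b e c) (hy : IsEntireSol q y)
    {s : ℝ} (hs : 0 ≤ s) (hst : s ≤ t) (h0 : robinTrace y (t * e) = 0) :
    rayEnergy b e y s ≤ 0 := by
  refine (H.monotoneOn hy hs (hs.trans hst) hst).trans ?_
  rw [rayEnergy, eq_neg_of_add_eq_zero_left h0, mul_neg, mul_assoc, conj_mul', neg_re,
    ← ofReal_pow, re_mul_ofReal, neg_nonpos]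
  exact mul_nonneg (H.pos.le.trans H.le_re_weight) (sq_nonneg _)

lemma mul_exp_le_norm_robinTrace_sq (H : RayCoercive q b e c) (hy : IsEntireSol q y)
    (ht : 0 ≤ t) :
    c * (rayEnergy b e y 0 * Real.exp (2 * c * t)) ≤ ‖robinTrace y (t * e)‖ ^ 2 := by
  refine le_trans ?_ (mul_re_mul_conj_mul_le H.norm_weight H.pos.le H.le_re_weight)
  have hmono := H.monotoneOn_mul_exp hy (κ := -(2 * c))
    (by rw [abs_neg, abs_of_pos (mul_pos two_pos H.pos)]) Set.self_mem_Ici ht ht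
  simp only [mul_zero, Real.exp_zero, mul_one] at hmono
  rw [neg_mul, Real.exp_neg, ← div_eq_mul_inv, le_div_iff₀ (Real.exp_pos _)] at hmono
  exact mul_le_mul_of_nonneg_left hmono H.pos.le

end RayCoercive

/-- A fundamental system of `y'' = q y`, normalized at `0` so that `u` has positive energy along
every coercive ray and the Wronskian of `u` and `v` is `1`. -/
structure RobinBasis (q u v : ℂ → ℂ) : Prop where
  left : IsEntireSol q u
  right : IsEntireSol q v
  left_zero : u 0 = 1
  deriv_left_zero : deriv u 0 = 1
  right_zero : v 0 = 0
  deriv_right_zero : deriv v 0 = 1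

lemma exists_robinBasis (hq : Differentiable ℂ q) : ∃ u v, RobinBasis q u v := by
  obtain ⟨u, hu, hu0, hu1⟩ := exists_isEntireSol hq 0 1 1
  obtain ⟨v, hv, hv0, hv1⟩ := exists_isEntireSol hq 0 0 1
  exact ⟨u, v, hu, hv, hu0, hu1, hv0, hv1⟩

namespace RobinBasis

lemma sub_const_mul_ne_zero (h : RobinBasis q u v) (L : ℂ) : (fun z => v z - L * u z) ≠ 0 := by
  intro h0
  have hL := congrFun h0 0
  have hd := h.right.deriv_sub_const_mul h.left L 0
  simp only [h0, h.right_zero, h.left_zero, h.deriv_right_zero, h.deriv_left_zero,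
    Pi.zero_apply, deriv_zero] at hL hd
  exact one_ne_zero (by linear_combination -hL - hd : (1 : ℂ) = 0)

lemma sq_mul_exp_le_norm_robinTrace_sq (h : RobinBasis q u v) (H : RayCoercive q b e c)
    (ht : 0 ≤ t) : c ^ 2 * Real.exp (2 * c * t) ≤ ‖robinTrace u (t * e)‖ ^ 2 := by
  have hE : c ≤ rayEnergy b e u 0 := by
    simpa [rayEnergy, h.left_zero, h.deriv_left_zero] using H.le_re_weight
  refine le_trans ?_ (H.mul_exp_le_norm_robinTrace_sq h.left ht)
  rw [sq, mul_assoc]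
  have := H.pos.le
  gcongr

lemma robinTrace_ne_zero (h : RobinBasis q u v) (H : RayCoercive q b e c) (ht : 0 ≤ t) :
    robinTrace u (t * e) ≠ 0 := by
  have hpos : 0 < c ^ 2 * Real.exp (2 * c * t) := mul_pos (pow_pos H.pos 2) (Real.exp_pos _)
  exact norm_ne_zero_iff.1
    (pow_ne_zero_iff two_ne_zero |>.1 (hpos.trans_le (h.sq_mul_exp_le_norm_robinTrace_sq H ht)).ne')

lemma hasDerivAt_robinQuot (h : RobinBasis q u v) {z : ℂ} (hz : robinTrace u z ≠ 0) :
    HasDerivAt (robinQuot u v) ((1 - q z) / robinTrace u z ^ 2) z := by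
  refine (_root_.hasDerivAt_robinQuot h.left h.right hz).congr_deriv ?_
  rw [h.left.wronskian_eq h.right z 0, h.left_zero, h.right_zero, h.deriv_right_zero]
  simp

lemma rayEnergy_sub_robinQuot_mul_nonpos (h : RobinBasis q u v) (H : RayCoercive q b e c)
    {s : ℝ} (hs : 0 ≤ s) (hst : s ≤ t) :
    rayEnergy b e (fun z => v z - robinQuot u v (t * e) * u z) s ≤ 0 :=
  H.rayEnergy_nonpos_of_robinTrace_eq_zero (h.right.sub_const_mul h.left _) hs hst
    (robinTrace_sub_robinQuot_mul h.left h.right (h.robinTrace_ne_zero H (hs.trans hst)))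

lemma norm_robinQuot_le (h : RobinBasis q u v) (H : RayCoercive q b e c) (ht : 0 ≤ t) :
    ‖robinQuot u v (t * e)‖ ≤ c⁻¹ := by
  set L := robinQuot u v (t * e)
  have hE := h.rayEnergy_sub_robinQuot_mul_nonpos H le_rfl ht
  have hE0 : rayEnergy b e (fun z => v z - L * u z) 0 = b.re * ‖L‖ ^ 2 - (b * conj L).re := by
    simp only [rayEnergy, h.right.deriv_sub_const_mul h.left, ofReal_zero, zero_mul, h.left_zero,
      h.right_zero, h.deriv_left_zero, h.deriv_right_zero]
    rw [← re_mul_ofReal, ofReal_pow, ← conj_mul', ← sub_re, zero_sub, map_neg, mul_one]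
    congr 1
    ring
  have hre := re_le_norm (b * conj L)
  rw [norm_mul, H.norm_weight, RCLike.norm_conj, one_mul] at hre
  have hsq : c * ‖L‖ ^ 2 ≤ ‖L‖ := by
    linarith [mul_le_mul_of_nonneg_right H.le_re_weight (sq_nonneg ‖L‖)]
  rw [← one_div, le_div_iff₀ H.pos]
  rcases (norm_nonneg L).eq_or_lt with hL | hL
  · rw [← hL, zero_mul]; exact zero_le_one
  · nlinarith

end RobinBasis

end Robin

section CoerciveSector

/-- Coercivity, with a common constant, along all rays of the sector `|θ| ≤ Θ`; `b θ` is the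
weight of the energy along the ray of direction `exp (θ I)`. -/
def SectorCoercive (q : ℂ → ℂ) (b : ℝ → ℂ) (Θ c : ℝ) : Prop :=
  ∀ θ : ℝ, |θ| ≤ Θ → RayCoercive q (b θ) (exp (θ * I)) c

lemma tendsto_one_add_pow_div_exp (m : ℕ) {κ : ℝ} (hκ : 0 < κ) :
    Tendsto (fun t : ℝ => (1 + t) ^ m / Real.exp (κ * t)) atTop (𝓝 0) := by
  have hlin : Tendsto (fun t : ℝ => κ * (1 + t)) atTop atTop :=
    (tendsto_atTop_add_const_left _ 1 tendsto_id).const_mul_atTop hκ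
  have h := ((Real.tendsto_pow_mul_exp_neg_atTop_nhds_zero m).comp hlin).const_mul
    (Real.exp κ / κ ^ m)
  rw [mul_zero] at h
  refine h.congr fun t => ?_
  simp only [Function.comp, mul_add, mul_one, neg_add, Real.exp_add, Real.exp_neg]
  rw [← mul_one_add, mul_pow]
  field_simp

lemma norm_sub_le_of_norm_deriv_le_arc {f f' : ℂ → ℂ} {t Θ K : ℝ} (ht : 0 ≤ t)
    (hf : ∀ φ : ℝ, |φ| ≤ Θ → HasDerivAt f (f' (t * exp (φ * I))) (t * exp (φ * I)))
    (hK : ∀ φ : ℝ, |φ| ≤ Θ → ‖f' (t * exp (φ * I))‖ ≤ K) {θ : ℝ} (hθ : |θ| ≤ Θ) :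
    ‖f (t * exp (θ * I)) - f t‖ ≤ K * t * |θ| := by
  have harc : ∀ φ : ℝ, HasDerivAt (fun φ : ℝ => (t : ℂ) * exp (φ * I))
      (t * (exp (φ * I) * I)) φ := fun φ => by
    have hlin : HasDerivAt (fun φ : ℝ => (φ : ℂ) * I) I φ := by
      simpa using (ofRealCLM.hasDerivAt (x := φ)).mul_const I
    exact hlin.cexp.const_mul (t : ℂ)
  have h := (convex_Icc (-Θ) Θ).norm_image_sub_le_of_norm_hasDerivWithin_le (C := K * t)
    (fun φ hφ => ((hf φ (abs_le.2 hφ)).comp φ (harc φ)).hasDerivWithinAt) (fun φ hφ => ?_)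
    (abs_le.1 (by simpa using (abs_nonneg θ).trans hθ) : (0 : ℝ) ∈ _) (abs_le.1 hθ)
  · simpa using h
  · rw [norm_mul, norm_mul, norm_mul, norm_exp_ofReal_mul_I, norm_I, norm_real,
      Real.norm_of_nonneg ht, mul_one, mul_one]
    exact mul_le_mul_of_nonneg_right (hK φ (abs_le.2 hφ)) ht

variable {q u v y : ℂ → ℂ} {b : ℝ → ℂ} {Θ c : ℝ}

lemma norm_one_sub_le_of_growth {C : ℝ} {m : ℕ} (hC : ∀ z, ‖q z‖ ≤ C * (1 + ‖z‖) ^ m) (z : ℂ) :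
    ‖1 - q z‖ ≤ (1 + C) * (1 + ‖z‖) ^ m := by
  have hsub := norm_sub_le 1 (q z)
  have hone : 1 ≤ (1 + ‖z‖) ^ m := one_le_pow₀ (by linarith [norm_nonneg z])
  rw [norm_one] at hsub
  linarith [hC z]

namespace RobinBasis

lemma norm_robinQuot_sub_le (h : RobinBasis q u v) (H : SectorCoercive q b Θ c) {C : ℝ} {m : ℕ}
    (hC : ∀ z, ‖q z‖ ≤ C * (1 + ‖z‖) ^ m) {θ t : ℝ} (hθ : |θ| ≤ Θ) (ht : 0 ≤ t) :
    ‖robinQuot u v (t * exp (θ * I)) - robinQuot u v t‖ ≤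
      (1 + C) / c ^ 2 * |θ| * ((1 + t) ^ (m + 1) / Real.exp (2 * c * t)) := by
  have hc : 0 < c := (H θ hθ).pos
  have hC0 : 0 ≤ C := by simpa using (norm_nonneg _).trans (hC 0)
  refine (norm_sub_le_of_norm_deriv_le_arc (Θ := Θ) (f' := fun z => (1 - q z) / robinTrace u z ^ 2)
    (K := (1 + C) * (1 + t) ^ m / (c ^ 2 * Real.exp (2 * c * t))) ht
    (fun φ hφ => h.hasDerivAt_robinQuot (h.robinTrace_ne_zero (H φ hφ) ht))
    (fun φ hφ => ?_) hθ).trans ?_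
  · have hnum := norm_one_sub_le_of_growth hC (t * exp (φ * I))
    rw [norm_mul, norm_exp_ofReal_mul_I, norm_real, Real.norm_of_nonneg ht, mul_one] at hnum
    rw [norm_div, norm_pow]
    have hden := h.sq_mul_exp_le_norm_robinTrace_sq (H φ hφ) ht
    gcongr
  · calc _ ≤ (1 + C) * (1 + t) ^ m / (c ^ 2 * Real.exp (2 * c * t)) * (1 + t) * |θ| := by
          gcongr; linarith
      _ = _ := by field_simp; ring

lemma tendsto_robinQuot_sub (h : RobinBasis q u v) (H : SectorCoercive q b Θ c) {C : ℝ} {m : ℕ}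
    (hC : ∀ z, ‖q z‖ ≤ C * (1 + ‖z‖) ^ m) {θ : ℝ} (hθ : |θ| ≤ Θ) :
    Tendsto (fun t : ℝ => robinQuot u v (t * exp (θ * I)) - robinQuot u v t) atTop (𝓝 0) := by
  have hlim := (tendsto_one_add_pow_div_exp (m + 1) (mul_pos two_pos (H θ hθ).pos)).const_mul
    ((1 + C) / c ^ 2 * |θ|)
  rw [mul_zero] at hlim
  refine squeeze_zero_norm' ?_ hlim
  filter_upwards [eventually_ge_atTop 0] with t ht
  exact h.norm_robinQuot_sub_le H hC hθ ht

lemma exists_tendsto_robinQuot (h : RobinBasis q u v) (H : SectorCoercive q b Θ c) (hΘ : 0 ≤ Θ)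
    {C : ℝ} {m : ℕ} (hC : ∀ z, ‖q z‖ ≤ C * (1 + ‖z‖) ^ m) :
    ∃ (L : ℂ) (s : ℕ → ℝ), Tendsto s atTop atTop ∧ ∀ θ : ℝ, |θ| ≤ Θ →
      Tendsto (fun n => robinQuot u v (s n * exp (θ * I))) atTop (𝓝 L) := by
  have hball : ∀ n : ℕ, robinQuot u v (n : ℝ) ∈ Metric.closedBall (0 : ℂ) c⁻¹ := fun n => by
    simpa using h.norm_robinQuot_le (H 0 (by simpa using hΘ)) n.cast_nonneg
  obtain ⟨L, -, φ, hφ, hL⟩ := (isCompact_closedBall (0 : ℂ) c⁻¹).tendsto_subseq hball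
  have hs : Tendsto (fun n => (φ n : ℝ)) atTop atTop :=
    tendsto_natCast_atTop_atTop.comp hφ.tendsto_atTop
  refine ⟨L, _, hs, fun θ hθ => ?_⟩
  simpa [Function.comp_def] using ((h.tendsto_robinQuot_sub H hC hθ).comp hs).add hL

end RobinBasis

namespace SectorCoercive

lemma exists_rayEnergy_nonpos (H : SectorCoercive q b Θ c) (hq : Differentiable ℂ q)
    (hΘ : 0 ≤ Θ) {C : ℝ} {m : ℕ} (hC : ∀ z, ‖q z‖ ≤ C * (1 + ‖z‖) ^ m) :
    ∃ y, y ≠ 0 ∧ IsEntireSol q y ∧ ∀ θ : ℝ, |θ| ≤ Θ → ∀ t : ℝ, 0 ≤ t →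
      rayEnergy (b θ) (exp (θ * I)) y t ≤ 0 := by
  obtain ⟨u, v, h⟩ := exists_robinBasis hq
  obtain ⟨L, s, hs, hL⟩ := h.exists_tendsto_robinQuot H hΘ hC
  refine ⟨fun z => v z - L * u z, h.sub_const_mul_ne_zero L, h.right.sub_const_mul h.left L,
    fun θ hθ t ht => ?_⟩
  have hcont : Continuous fun L : ℂ =>
      rayEnergy (b θ) (exp (θ * I)) (fun z => v z - L * u z) t := by
    simp only [rayEnergy, h.right.deriv_sub_const_mul h.left]
    fun_prop
  refine le_of_tendsto ((hcont.tendsto L).comp (hL θ hθ)) ?_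
  filter_upwards [hs.eventually_ge_atTop t] with n hn
  exact h.rayEnergy_sub_robinQuot_mul_nonpos (H θ hθ) ht hn

lemma tendsto_zero_of_rayEnergy_nonpos (H : SectorCoercive q b Θ c) (hΘ : 0 ≤ Θ)
    (hy : IsEntireSol q y) (hE : ∀ θ : ℝ, |θ| ≤ Θ → ∀ t : ℝ, 0 ≤ t →
      rayEnergy (b θ) (exp (θ * I)) y t ≤ 0) :
    Tendsto y (sectorAtInfty Θ) (𝓝 0) := by
  have hc : 0 < c := (H 0 (by simpa using hΘ)).pos
  have hexp : Tendsto (fun z : ℂ => Real.exp (-(2 * c * ‖z‖))) (sectorAtInfty Θ) (𝓝 0) :=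
    (Real.tendsto_exp_neg_atTop_nhds_zero.comp
      (tendsto_norm_cobounded_atTop.const_mul_atTop (by positivity))).mono_left inf_le_left
  have hsq : Tendsto (fun z => ‖y z‖ ^ 2) (sectorAtInfty Θ) (𝓝 0) := by
    have hbound := hexp.const_mul (‖y 0‖ * ‖deriv y 0‖ / c)
    rw [mul_zero] at hbound
    refine squeeze_zero' (.of_forall fun z => sq_nonneg _) ?_ hbound
    filter_upwards [eventually_inf_principal.2 (.of_forall fun z hz => hz)] with z hz
    have hyz := (H _ hz).mul_norm_sq_le_mul_exp hy (hE _ hz) (norm_nonneg z)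
    rw [norm_mul_exp_arg_mul_I] at hyz
    rwa [div_mul_eq_mul_div, le_div_iff₀' hc]
  rw [tendsto_zero_iff_norm_tendsto_zero]
  simpa using hsq.sqrt

lemma exists_isEntireSol_tendsto_zero (H : SectorCoercive q b Θ c) (hq : Differentiable ℂ q)
    (hΘ : 0 ≤ Θ) {C : ℝ} {m : ℕ} (hC : ∀ z, ‖q z‖ ≤ C * (1 + ‖z‖) ^ m) :
    ∃ y, y ≠ 0 ∧ IsEntireSol q y ∧ Tendsto y (sectorAtInfty Θ) (𝓝 0) := by
  obtain ⟨y, hy0, hy, hE⟩ := H.exists_rayEnergy_nonpos hq hΘ hC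
  exact ⟨y, hy0, hy, H.tendsto_zero_of_rayEnergy_nonpos hΘ hy hE⟩

end SectorCoercive

end CoerciveSector

section Polynomial

open Polynomial ComplexConjugate ComplexOrder

lemma cos_le_re_exp_mul_I {x Φ : ℝ} (hΦ : Φ ≤ Real.pi) (hx : |x| ≤ Φ) :
    Real.cos Φ ≤ (exp (x * I)).re := by
  rw [exp_ofReal_mul_I_re, ← Real.cos_abs x]
  exact Real.cos_le_cos_of_nonneg_of_le_pi (abs_nonneg _) hΦ hx

/-- The weight `exp (-(d / 2) θ I)` of the energy along the ray of direction `exp (θ I)`, for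
potentials growing like `z ^ d`. With it, the terms of the derivative of the energy have opposite
phases `∓ (d / 2 + 1) θ`, of positive cosine in the Stokes sector `|θ| < π / (d + 2)`. -/
noncomputable def rayWeight (d : ℕ) (θ : ℝ) : ℂ := exp ((-(d / 2 * θ) : ℝ) * I)

lemma norm_rayWeight (d : ℕ) (θ : ℝ) : ‖rayWeight d θ‖ = 1 := norm_exp_ofReal_mul_I _

variable {d : ℕ} {Θ θ : ℝ}

lemma cos_le_re_rayWeight (hΘ : (d / 2 + 1) * Θ ≤ Real.pi) (hθ : |θ| ≤ Θ) :
    Real.cos ((d / 2 + 1) * Θ) ≤ (rayWeight d θ).re := by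
  refine cos_le_re_exp_mul_I hΘ ?_
  rw [abs_neg, abs_mul, abs_of_nonneg (by positivity)]
  exact mul_le_mul (by linarith) hθ (abs_nonneg θ) (by positivity)

lemma cos_le_re_rayWeight_mul_conj (hΘ : (d / 2 + 1) * Θ ≤ Real.pi) (hθ : |θ| ≤ Θ) :
    Real.cos ((d / 2 + 1) * Θ) ≤ (rayWeight d θ * conj (exp (θ * I))).re := by
  have hphase : rayWeight d θ * conj (exp (θ * I)) =
      exp ((-((d / 2 + 1) * θ) : ℝ) * I) := by
    rw [rayWeight, ← exp_conj, map_mul, conj_ofReal, conj_I, ← exp_add]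
    push_cast
    ring_nf
  rw [hphase]
  refine cos_le_re_exp_mul_I hΘ ?_
  rw [abs_neg, abs_mul, abs_of_nonneg (by positivity)]
  gcongr

-- In the binomial expansion, the terms have phases `(d / 2 + 1 - m) θ` with `0 ≤ m ≤ d`.
lemma cos_mul_pow_le_re_rayWeight_mul {x t : ℝ} (hx : 0 ≤ x) (ht : 0 ≤ t)
    (hΘ : (d / 2 + 1) * Θ ≤ Real.pi) (hθ : |θ| ≤ Θ) :
    Real.cos ((d / 2 + 1) * Θ) * (x + t) ^ d ≤
      (rayWeight d θ * exp (θ * I) * (x + t * exp (θ * I)) ^ d).re := by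
  rw [add_pow, add_pow, Finset.mul_sum, Finset.mul_sum, re_sum]
  refine Finset.sum_le_sum fun m hm => ?_
  have hmd : m ≤ d := Finset.mem_range_succ_iff.1 hm
  have hterm : rayWeight d θ * exp (θ * I) *
      ((x : ℂ) ^ m * (t * exp (θ * I)) ^ (d - m) * (d.choose m : ℂ)) =
      exp (((d / 2 + 1 - m) * θ : ℝ) * I) * ((x ^ m * t ^ (d - m) * d.choose m : ℝ) : ℂ) := by
    have hphase : exp (((d / 2 + 1 - m) * θ : ℝ) * I) =
        rayWeight d θ * exp (θ * I) * exp (θ * I) ^ (d - m) := by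
      rw [rayWeight, ← exp_nat_mul, ← exp_add, ← exp_add, Nat.cast_sub hmd]
      push_cast
      ring_nf
    rw [hphase, mul_pow]
    push_cast
    ring
  rw [hterm, re_mul_ofReal]
  refine mul_le_mul_of_nonneg_right (cos_le_re_exp_mul_I hΘ ?_) (by positivity)
  have hmd' : (m : ℝ) ≤ d := Nat.cast_le.2 hmd
  rw [abs_mul]
  gcongr
  exact abs_le.2 ⟨by linarith, by linarith [m.cast_nonneg (α := ℝ)]⟩

lemma norm_eval_le_sum_mul_pow (P : ℂ[X]) {m : ℕ} (hm : P.natDegree < m) {z : ℂ} {s : ℝ}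
    (hs : 1 ≤ s) (hz : ‖z‖ ≤ s) :
    ‖P.eval z‖ ≤ (∑ i ∈ Finset.range m, ‖P.coeff i‖) * s ^ (m - 1) := by
  rw [eval_eq_sum_range' hm, Finset.sum_mul]
  refine (norm_sum_le _ _).trans (Finset.sum_le_sum fun i hi => ?_)
  rw [norm_mul, norm_pow]
  gcongr
  calc ‖z‖ ^ i ≤ s ^ i := by gcongr
    _ ≤ s ^ (m - 1) := pow_le_pow_right₀ hs (Nat.le_sub_one_of_lt (Finset.mem_range.1 hi))

lemma exists_forall_norm_eval_le (P : ℂ[X]) :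
    ∃ (C : ℝ) (m : ℕ), ∀ z, ‖P.eval z‖ ≤ C * (1 + ‖z‖) ^ m :=
  ⟨_, _, fun z => norm_eval_le_sum_mul_pow P (Nat.lt_succ_self _)
    (by linarith [norm_nonneg z]) (by linarith)⟩

variable {P : ℂ[X]}

lemma mul_pow_le_re_rayWeight_mul_eval (hP : P.natDegree ≠ 0) (ha : 0 < P.leadingCoeff)
    {x t : ℝ} (hx : 1 ≤ x) (ht : 0 ≤ t) (hΘ : (P.natDegree / 2 + 1) * Θ ≤ Real.pi)
    (hθ : |θ| ≤ Θ) :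
    (P.leadingCoeff.re * Real.cos ((P.natDegree / 2 + 1) * Θ) * (x + t) -
        ∑ i ∈ Finset.range P.natDegree, ‖P.eraseLead.coeff i‖) * (x + t) ^ (P.natDegree - 1) ≤
      (rayWeight P.natDegree θ * exp (θ * I) * P.eval (t * exp (θ * I) + x)).re := by
  set z := (t : ℂ) * exp (θ * I) + x with hz
  have hz_norm : ‖z‖ ≤ x + t := by
    refine (norm_add_le _ _).trans_eq ?_
    rw [norm_mul, norm_exp_ofReal_mul_I, norm_real, norm_real, Real.norm_of_nonneg ht,
      Real.norm_of_nonneg (by linarith), mul_one, add_comm]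
  have hlow : -((∑ i ∈ Finset.range P.natDegree, ‖P.eraseLead.coeff i‖) *
      (x + t) ^ (P.natDegree - 1)) ≤
      (rayWeight P.natDegree θ * exp (θ * I) * P.eraseLead.eval z).re := by
    refine neg_le_of_abs_le ((abs_re_le_norm _).trans ?_)
    rw [norm_mul, norm_mul, norm_rayWeight, norm_exp_ofReal_mul_I, one_mul, one_mul]
    exact norm_eval_le_sum_mul_pow _
      (P.eraseLead_natDegree_le.trans_lt (Nat.sub_one_lt hP)) (by linarith) hz_norm
  have hlead := mul_le_mul_of_nonneg_left
    (cos_mul_pow_le_re_rayWeight_mul (zero_le_one.trans hx) ht hΘ hθ) (pos_iff.1 ha).1.le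
  have heval : P.eval z = P.eraseLead.eval z + P.leadingCoeff.re * z ^ P.natDegree := by
    conv_lhs => rw [← P.eraseLead_add_C_mul_X_pow]
    rw [eval_add, eval_mul, eval_C, eval_pow, eval_X, ← eq_re_of_ofReal_le ha.le]
  have hpow : (x + t) ^ P.natDegree = (x + t) * (x + t) ^ (P.natDegree - 1) :=
    (mul_pow_sub_one hP _).symm
  rw [add_comm (x : ℂ), ← hz, hpow, ← re_ofReal_mul] at hlead
  rw [heval, mul_add (_ * exp _), add_re, mul_left_comm _ (P.leadingCoeff.re : ℂ)]
  linarith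

lemma exists_sectorCoercive (hP : P.natDegree ≠ 0) (ha : 0 < P.leadingCoeff) (hΘ0 : 0 ≤ Θ)
    (hΘ : Θ < Real.pi / (P.natDegree + 2)) :
    ∃ x c : ℝ, SectorCoercive (fun z => P.eval (z + x)) (rayWeight P.natDegree) Θ c := by
  have hΦ : (P.natDegree / 2 + 1) * Θ < Real.pi / 2 := by
    rw [lt_div_iff₀ (by positivity)] at hΘ
    linarith
  have hΦπ : (P.natDegree / 2 + 1) * Θ ≤ Real.pi := by linarith [Real.pi_pos]
  set a := P.leadingCoeff.re
  have ha' : 0 < a := (pos_iff.1 ha).1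
  set c := Real.cos ((P.natDegree / 2 + 1) * Θ)
  have hc : 0 < c := Real.cos_pos_of_mem_Ioo
    ⟨by linarith [Real.pi_pos, (by positivity : 0 ≤ (P.natDegree / 2 + 1) * Θ)], hΦ⟩
  set K := ∑ i ∈ Finset.range P.natDegree, ‖P.eraseLead.coeff i‖
  have hK : 0 ≤ K := Finset.sum_nonneg fun _ _ => norm_nonneg _
  set x := 1 + (K + c) / (a * c) with hx_def
  have hx : 1 ≤ x := le_add_of_nonneg_right (by positivity)
  have hx_mul : a * c * x = a * c + (K + c) := by rw [hx_def]; field_simp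
  refine ⟨x, c, fun θ hθ => ⟨hc, norm_rayWeight _ _, norm_exp_ofReal_mul_I θ,
    cos_le_re_rayWeight hΦπ hθ, cos_le_re_rayWeight_mul_conj hΦπ hθ, fun t ht => ?_⟩⟩
  refine le_trans ?_ (mul_pow_le_re_rayWeight_mul_eval hP ha hx ht hΦπ hθ)
  have hc_le : c ≤ a * c * (x + t) - K := by
    linarith [mul_pos ha' hc, mul_nonneg (mul_pos ha' hc).le ht]
  exact hc_le.trans (le_mul_of_one_le_right (hc.le.trans hc_le) (one_le_pow₀ (by linarith)))

lemma exists_isEntireSol_eval_tendsto_zero (hP : P.natDegree ≠ 0) (ha : 0 < P.leadingCoeff)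
    (hΘ0 : 0 ≤ Θ) (hΘ : Θ < Real.pi / (P.natDegree + 2)) :
    ∃ y, y ≠ 0 ∧ IsEntireSol (fun z => P.eval z) y ∧ Tendsto y (sectorAtInfty Θ) (𝓝 0) := by
  obtain ⟨Θ', hΘΘ', hΘ'⟩ := exists_between hΘ
  have hΘ'0 : 0 ≤ Θ' := hΘ0.trans hΘΘ'.le
  obtain ⟨x, c, H⟩ := exists_sectorCoercive hP ha hΘ'0 hΘ'
  obtain ⟨C, m, hC⟩ := exists_forall_norm_eval_le (P.comp (X + Polynomial.C (x : ℂ)))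
  obtain ⟨y, hy0, hy, hlim⟩ := H.exists_isEntireSol_tendsto_zero (by fun_prop) hΘ'0
    (fun z => by simpa using hC z)
  refine ⟨fun z => y (z - x), fun h => hy0 (funext fun z => ?_), ?_, ?_⟩
  · simpa using congrFun h (z + x)
  · simpa [← sub_eq_add_neg] using hy.comp_affine 1 (-x)
  · exact tendsto_sectorAtInfty_of_translate x (by simpa using hlim) hΘΘ'

-- The solutions decaying in the various closed subsectors are proportional by uniqueness.
lemma exists_isEntireSol_eval_forall_tendsto_zero (hP : P.natDegree ≠ 0)
    (ha : 0 < P.leadingCoeff) :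
    ∃ y, y ≠ 0 ∧ IsEntireSol (fun z => P.eval z) y ∧
      ∀ Θ < Real.pi / (P.natDegree + 2), Tendsto y (sectorAtInfty Θ) (𝓝 0) := by
  obtain ⟨Θ₀, hΘ₀, hΘ₀'⟩ :=
    exists_between (by positivity : 0 < Real.pi / ((P.natDegree : ℝ) + 2))
  obtain ⟨y, hy0, hy, hy_lim⟩ := exists_isEntireSol_eval_tendsto_zero hP ha hΘ₀.le hΘ₀'
  refine ⟨y, hy0, hy, fun Θ hΘ => ?_⟩
  obtain ⟨w, hw0, hw, hw_lim⟩ := exists_isEntireSol_eval_tendsto_zero hP ha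
    (hΘ₀.le.trans (le_max_right Θ Θ₀)) (max_lt hΘ hΘ₀')
  obtain ⟨a, ha⟩ := hw.exists_eq_const_mul_of_tendsto P.differentiable hy hw0 hΘ₀
    (hw_lim.mono_left (monotone_sectorAtInfty (le_max_right _ _))) hy_lim
  have hw_Θ := (hw_lim.mono_left (monotone_sectorAtInfty (le_max_left Θ Θ₀))).const_mul a
  rw [mul_zero] at hw_Θ
  exact hw_Θ.congr fun z => (ha z).symm

/-- The potential of the equation satisfied by `z ↦ y (ω z)` when `y'' = P y`. -/
noncomputable def rotatePotential (P : ℂ[X]) (ω : ℂ) : ℂ[X] :=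
  Polynomial.C (ω ^ 2) * P.comp (Polynomial.C ω * X)

lemma natDegree_rotatePotential (P : ℂ[X]) {ω : ℂ} (hω : ω ≠ 0) :
    (rotatePotential P ω).natDegree = P.natDegree := by
  rw [rotatePotential, natDegree_C_mul (pow_ne_zero 2 hω), natDegree_comp, natDegree_C_mul_X ω hω,
    mul_one]

lemma leadingCoeff_rotatePotential (P : ℂ[X]) {ω : ℂ} (hω : ω ≠ 0) :
    (rotatePotential P ω).leadingCoeff = P.leadingCoeff * ω ^ (P.natDegree + 2) := by
  have hdeg : (Polynomial.C ω * X).natDegree ≠ 0 := by simp [natDegree_C_mul_X ω hω]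
  rw [rotatePotential, leadingCoeff_mul, leadingCoeff_comp hdeg, leadingCoeff_C,
    leadingCoeff_C_mul_X]
  ring

lemma IsEntireSol.of_rotatePotential {ω : ℂ} (hω : ω ≠ 0) {y : ℂ → ℂ}
    (hy : IsEntireSol (fun z => (rotatePotential P ω).eval z) y) :
    IsEntireSol (fun z => P.eval z) fun z => y (ω⁻¹ * z) := by
  simpa [rotatePotential, hω, ← mul_assoc, ← mul_pow] using hy.comp_affine ω⁻¹ 0

theorem stmt8_general (P : ℂ[X]) (hP : P.natDegree ≠ 0) (φ : ℝ)
    (hφ : 0 < P.leadingCoeff * exp (φ * I) ^ (P.natDegree + 2)) :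
    ∃ y : ℂ → ℂ, y ≠ 0 ∧ IsEntireSol (fun z => P.eval z) y ∧
      ∀ θ : ℝ, |θ - φ| < Real.pi / (P.natDegree + 2) →
        Tendsto (fun r : ℝ => y (r * exp (θ * I))) atTop (𝓝 0) := by
  have hω : exp (φ * I) ≠ 0 := exp_ne_zero _
  obtain ⟨y, hy0, hy, hlim⟩ := exists_isEntireSol_eval_forall_tendsto_zero
    (natDegree_rotatePotential P hω ▸ hP) (leadingCoeff_rotatePotential P hω ▸ hφ)
  refine ⟨_, fun h => hy0 (funext fun z => ?_), hy.of_rotatePotential hω, fun θ hθ => ?_⟩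
  · simpa [hω] using congrFun h (exp (φ * I) * z)
  · rw [natDegree_rotatePotential P hω] at hlim
    have hθπ : |θ - φ| < Real.pi := hθ.trans_le
      (div_le_self Real.pi_pos.le (by linarith [P.natDegree.cast_nonneg (α := ℝ)]))
    refine ((hlim _ hθ).comp (tendsto_mul_exp_sectorAtInfty hθπ)).congr fun r => ?_
    simp only [Function.comp, ofReal_sub, sub_mul, exp_sub]
    congr 1
    field_simp

end Polynomial

lemma exp_two_pi_mul_div_mul_I_pow {n : ℕ} (hn : n ≠ 0) (j : ℕ) :
    exp ((2 * Real.pi * j / n : ℝ) * I) ^ n = 1 := by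
  have hn' : (n : ℂ) ≠ 0 := Nat.cast_ne_zero.2 hn
  rw [← exp_nat_mul, ← exp_nat_mul_two_pi_mul_I j]
  congr 1
  push_cast
  field_simp

section SchrodingerPolynomial

open Polynomial ComplexOrder

/-- The polynomial `P_α - λ`, so that the Schrödinger equation is `y'' = (P_α - λ) y`. -/
noncomputable def schrodingerPolynomial (d : ℕ) (α : Fin (d - 1) → ℂ) (lam : ℂ) : ℂ[X] :=
  X ^ d + (∑ i : Fin (d - 1), Polynomial.C (α i) * X ^ ((i : ℕ) + 1) - Polynomial.C lam)

variable {d : ℕ} (α : Fin (d - 1) → ℂ) (lam : ℂ)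

lemma isSol_iff_isEntireSol {y : ℂ → ℂ} :
    IsSol d α lam y ↔ IsEntireSol (fun z => (schrodingerPolynomial d α lam).eval z) y := by
  simp only [IsSol, IsEntireSol, Pol, schrodingerPolynomial, eval_add, eval_sub, eval_pow, eval_X,
    eval_finsetSum, eval_mul, eval_C, add_sub_assoc]

lemma degree_sum_sub_C_lt (hd : d ≠ 0) :
    (∑ i : Fin (d - 1), Polynomial.C (α i) * X ^ ((i : ℕ) + 1) - Polynomial.C lam).degree < d := by
  refine (degree_sub_le _ _).trans_lt (max_lt ?_ ?_)
  · refine (degree_sum_le _ _).trans_lt ((Finset.sup_lt_iff (WithBot.bot_lt_coe d)).2 fun i _ => ?_)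
    exact (degree_C_mul_X_pow_le _ _).trans_lt (Nat.cast_lt.2 (by omega))
  · exact degree_C_le.trans_lt (Nat.cast_pos.2 (Nat.pos_of_ne_zero hd))

lemma monic_schrodingerPolynomial (hd : d ≠ 0) : (schrodingerPolynomial d α lam).Monic :=
  monic_X_pow_add (degree_sum_sub_C_lt α lam hd)

lemma natDegree_schrodingerPolynomial (hd : d ≠ 0) :
    (schrodingerPolynomial d α lam).natDegree = d := by
  refine natDegree_eq_of_degree_eq_some ?_
  rw [schrodingerPolynomial, degree_add_eq_left_of_degree_lt, degree_X_pow]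
  rw [degree_X_pow]
  exact degree_sum_sub_C_lt α lam hd

lemma leadingCoeff_schrodingerPolynomial_mul_exp_pow_pos (hd : d ≠ 0) (j : ℕ) :
    0 < (schrodingerPolynomial d α lam).leadingCoeff *
      exp ((2 * Real.pi * j / (d + 2 : ℕ) : ℝ) * I) ^
        ((schrodingerPolynomial d α lam).natDegree + 2) := by
  rw [monic_schrodingerPolynomial α lam hd, natDegree_schrodingerPolynomial α lam hd,
    exp_two_pi_mul_div_mul_I_pow (Nat.succ_ne_zero _), one_mul]
  exact zero_lt_one

end SchrodingerPolynomial

theorem stmt8 (d : ℕ) (hd : 2 ≤ d) (n : ℕ) (hn : n = d + 2)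
    (α : Fin (d - 1) → ℂ) (lam : ℂ) (j : ℕ) (hj : j < n) :
    ∃ y : ℂ → ℂ, y ≠ 0 ∧ IsSol d α lam y ∧ Subdominant n j y := by
  subst hn
  have hd0 : d ≠ 0 := Nat.ne_zero_of_lt hd
  have hdeg := natDegree_schrodingerPolynomial α lam hd0
  obtain ⟨y, hy0, hy, hlim⟩ := stmt8_general (schrodingerPolynomial d α lam) (by rwa [hdeg]) _
    (leadingCoeff_schrodingerPolynomial_mul_exp_pow_pos α lam hd0 j)
  refine ⟨y, hy0, (isSol_iff_isEntireSol α lam).2 hy, fun θ hθ => hlim θ ?_⟩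
  simpa only [hdeg, DirIn, Nat.cast_add, Nat.cast_ofNat] using hθ
end

section
/- Let d ≥ 2 and n = d + 2. Every nonzero solution y of the Schrödinger equation with parameters (α, λ) is, in each Stokes sector S_j, either subdominant or dominant: for every j ∈ {0,…,n−1}, either y(r·e^{iθ}) → 0 as r → +∞ for every θ with |θ − 2πj/n| < π/n, or |y(r·e^{iθ})| → +∞ as r → +∞ for every θ with |θ − 2πj/n| < π/n. -/
open Complex Filter Topology

/-!
Put `ρ = (d + 2) / 2`. On the ray `arg z = θ` of the Stokes sector `S_j` the Liouville–Green
frequency is asymptotic to `k = e ^ (i (ρ θ - π j)) r ^ (d / 2)`, whose real part is comparable to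
its modulus, so the exponential dichotomy of the system for `y' ± k y`, with `y' = dy/dr`, makes
`y` either blow up or be `O(exp (-c(θ) r ^ ρ))` with `c(θ) > 0` continuous.
Grönwall's inequality shows that `y` has order at most `ρ`. By Phragmén–Lindelöf in a sector of
opening `π / (2 ρ)`, exponential decay on one ray then forces `y → 0` on all nearby rays, where the
dichotomy upgrades it to exponential decay again. Hence the set of rays on which `y → 0` is open
and closed in the sector.
-/

open Asymptotics Bornology
open scoped ComplexConjugate

theorem le_mul_exp_of_deriv_le {f f' S S' : ℝ → ℝ} {a r : ℝ}
    (hf : ∀ t, a ≤ t → HasDerivAt f (f' t) t) (hS : ∀ t, a ≤ t → HasDerivAt S (S' t) t)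
    (hle : ∀ t, a ≤ t → f' t ≤ S' t * f t) (hr : a ≤ r) :
    f r ≤ f a * Real.exp (S r - S a) := by
  have hderiv : ∀ t, a ≤ t → HasDerivAt (fun t => f t * Real.exp (-S t))
      ((f' t - S' t * f t) * Real.exp (-S t)) t := fun t ht =>
    ((hf t ht).mul (hS t ht).fun_neg.exp).congr_deriv (by ring)
  have hanti : AntitoneOn (fun t => f t * Real.exp (-S t)) (Set.Ici a) :=
    antitoneOn_of_hasDerivWithinAt_nonpos (convex_Ici a)
      (fun t ht => (hderiv t ht).continuousAt.continuousWithinAt)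
      (fun t ht => (hderiv t (interior_subset ht)).hasDerivWithinAt)
      (fun t ht => mul_nonpos_of_nonpos_of_nonneg (sub_nonpos.2 (hle t (interior_subset ht)))
        (Real.exp_pos _).le)
  calc f r = f r * Real.exp (-S r) * Real.exp (S r) := by
        rw [mul_assoc, ← Real.exp_add, neg_add_cancel, Real.exp_zero, mul_one]
    _ ≤ f a * Real.exp (-S a) * Real.exp (S r) :=
        mul_le_mul_of_nonneg_right (hanti Set.self_mem_Ici hr hr) (Real.exp_pos _).le
    _ = f a * Real.exp (S r - S a) := by rw [mul_assoc, ← Real.exp_add, neg_add_eq_sub]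

/- The region `4 * β < α` is invariant under the flow, because there `α - 4 * β` grows at least
like `exp S`; a solution that never enters it has `α` controlled by `β`, which then decays. -/
theorem growth_or_decay_of_deriv {α α' β β' S S' : ℝ → ℝ} {a : ℝ}
    (hα : ∀ r, a ≤ r → HasDerivAt α (α' r) r) (hβ : ∀ r, a ≤ r → HasDerivAt β (β' r) r)
    (hS : ∀ r, a ≤ r → HasDerivAt S (S' r) r) (hβ₀ : ∀ r, 0 ≤ β r) (hS₀ : ∀ r, a ≤ r → 0 ≤ S' r)
    (hα' : ∀ r, a ≤ r → S' r * (3 / 2 * α r - 1 / 8 * β r) ≤ α' r)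
    (hβ' : ∀ r, a ≤ r → β' r ≤ S' r * (1 / 8 * α r - 3 / 2 * β r)) :
    (∃ C > 0, ∀ᶠ r in atTop, C * Real.exp (S r) ≤ α r - 4 * β r) ∨
      ∃ C, ∀ᶠ r in atTop, α r ≤ 4 * β r ∧ β r ≤ C * Real.exp (-S r) := by
  by_cases hcone : ∃ b, a ≤ b ∧ 4 * β b < α b
  · obtain ⟨b, hab, hb⟩ := hcone
    refine .inl ⟨(α b - 4 * β b) * Real.exp (-S b), by have := sub_pos.2 hb; positivity, ?_⟩
    filter_upwards [eventually_ge_atTop b] with r hr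
    have hgrow := le_mul_exp_of_deriv_le (f := fun t => 4 * β t - α t) (S := S)
      (fun t ht => ((hβ t (hab.trans ht)).const_mul 4).sub (hα t (hab.trans ht)))
      (fun t ht => hS t (hab.trans ht)) (fun t ht => by
        have := mul_nonneg (hS₀ t (hab.trans ht)) (hβ₀ t)
        linarith [hα' t (hab.trans ht), hβ' t (hab.trans ht)]) hr
    rw [mul_assoc, ← Real.exp_add, neg_add_eq_sub]
    linarith
  · push Not at hcone
    refine .inr ⟨β a * Real.exp (S a), ?_⟩
    filter_upwards [eventually_ge_atTop a] with r hr
    refine ⟨hcone r hr, ?_⟩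
    have hdecay := le_mul_exp_of_deriv_le (S := fun t => -S t) hβ (fun t ht => (hS t ht).neg)
      (fun t ht => by
        have := mul_le_mul_of_nonneg_left (hcone t ht) (hS₀ t ht)
        linarith [hβ' t ht]) hr
    rwa [mul_assoc, ← Real.exp_add, add_comm, ← sub_neg_eq_add]

lemma le_two_mul_inner_mul_add {m : ℝ} {κ A B f : ℂ} (hm : 0 ≤ m) (hκ : m * ‖κ‖ ≤ κ.re)
    (hf : ‖f‖ ≤ m / 8 * ‖κ‖ * (‖A‖ + ‖B‖)) :
    m * ‖κ‖ * (3 / 2 * ‖A‖ ^ 2 - 1 / 8 * ‖B‖ ^ 2) ≤ 2 * inner ℝ A (κ * A + f) := by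
  have hdiag : inner ℝ A (κ * A) = κ.re * ‖A‖ ^ 2 := by
    rw [Complex.inner, mul_assoc, Complex.mul_conj, Complex.re_mul_ofReal,
      Complex.normSq_eq_norm_sq]
  have hcross : -(‖A‖ * (m / 8 * ‖κ‖ * (‖A‖ + ‖B‖))) ≤ inner ℝ A f :=
    (neg_le_neg (mul_le_mul_of_nonneg_left hf (norm_nonneg A))).trans
      (abs_le.1 (abs_real_inner_le_norm A f)).1
  have hre := mul_le_mul_of_nonneg_right hκ (sq_nonneg ‖A‖)
  have hamgm : 0 ≤ m * ‖κ‖ * (‖A‖ - ‖B‖) ^ 2 := by positivity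
  have hpos : 0 ≤ m * ‖κ‖ * ‖A‖ ^ 2 := by positivity
  rw [inner_add_right, hdiag]
  linarith

section LiouvilleGreen

/-- The setting of the Liouville–Green (WKB) approximation near `+∞`: `u` solves `u'' = q u` with
derivative `v`, the frequency `k` is a slowly varying approximate square root of `q` with real part
comparable to its modulus, and `S` is a primitive of `‖k‖`. -/
structure IsLiouvilleGreen (u v q k k' : ℝ → ℂ) (S : ℝ → ℝ) (m : ℝ) : Prop where
  pos : 0 < m
  hasDerivAt_u : ∀ᶠ r in atTop, HasDerivAt u (v r) r
  hasDerivAt_v : ∀ᶠ r in atTop, HasDerivAt v (q r * u r) r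
  hasDerivAt_k : ∀ᶠ r in atTop, HasDerivAt k (k' r) r
  hasDerivAt_S : ∀ᶠ r in atTop, HasDerivAt S ‖k r‖ r
  mul_norm_le_re : ∀ᶠ r in atTop, m * ‖k r‖ ≤ (k r).re
  isEquivalent : q ~[atTop] (k ^ 2)
  isLittleO : k' =o[atTop] (k ^ 2)

namespace IsLiouvilleGreen

variable {u v q k k' : ℝ → ℂ} {S : ℝ → ℝ} {m : ℝ}

lemma norm_add_sub_sub (r : ℝ) :
    ‖(v r + k r * u r) - (v r - k r * u r)‖ = 2 * ‖k r * u r‖ := by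
  rw [add_sub_sub_cancel, ← two_mul, norm_mul, Complex.norm_two]

theorem eventually_norm_mul_le (h : IsLiouvilleGreen u v q k k' S m) :
    ∀ᶠ r in atTop, ∀ w, ‖w‖ ≤ ‖q r - k r ^ 2‖ + ‖k' r‖ →
      ‖w * u r‖ ≤ m / 8 * ‖k r‖ * (‖v r + k r * u r‖ + ‖v r - k r * u r‖) := by
  have hm := h.pos
  filter_upwards [h.isEquivalent.isLittleO.def (by positivity : 0 < m / 8),
    h.isLittleO.def (by positivity : 0 < m / 8)] with r hq hk' w hw
  simp only [Pi.sub_apply, Pi.pow_apply, norm_pow] at hq hk'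
  have hku := norm_sub_le (v r + k r * u r) (v r - k r * u r)
  rw [norm_add_sub_sub, norm_mul] at hku
  calc ‖w * u r‖ ≤ (m / 8 * ‖k r‖ ^ 2 + m / 8 * ‖k r‖ ^ 2) * ‖u r‖ := by
        rw [norm_mul]
        gcongr
        exact hw.trans (add_le_add hq hk')
    _ = m / 8 * ‖k r‖ * (2 * (‖k r‖ * ‖u r‖)) := by ring
    _ ≤ _ := by gcongr

/- The combinations `v ± k * u` diagonalise `u'' = k ^ 2 * u` up to the error terms `q - k ^ 2`
and `k'`. -/
theorem norm_sq_growth_or_decay (h : IsLiouvilleGreen u v q k k' S m) :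
    (∃ C > 0, ∀ᶠ r in atTop,
        C * Real.exp (m * S r) ≤ ‖v r + k r * u r‖ ^ 2 - 4 * ‖v r - k r * u r‖ ^ 2) ∨
      ∃ C, ∀ᶠ r in atTop, ‖v r + k r * u r‖ ^ 2 ≤ 4 * ‖v r - k r * u r‖ ^ 2 ∧
        ‖v r - k r * u r‖ ^ 2 ≤ C * Real.exp (-(m * S r)) := by
  have hm := h.pos
  obtain ⟨a, ha⟩ := eventually_atTop.1 <| h.hasDerivAt_u.and <| h.hasDerivAt_v.and <|
    h.hasDerivAt_k.and <| h.hasDerivAt_S.and <| h.mul_norm_le_re.and h.eventually_norm_mul_le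
  choose hu hv hk hS hre herr using ha
  have hplus : ∀ r ≥ a, HasDerivAt (fun t => v t + k t * u t)
      (k r * (v r + k r * u r) + (q r - k r ^ 2 + k' r) * u r) r := fun r hr =>
    ((hv r hr).add ((hk r hr).mul (hu r hr))).congr_deriv (by ring)
  have hminus : ∀ r ≥ a, HasDerivAt (fun t => v t - k t * u t)
      (-(k r * (v r - k r * u r) + -(q r - k r ^ 2 - k' r) * u r)) r := fun r hr =>
    ((hv r hr).sub ((hk r hr).mul (hu r hr))).congr_deriv (by ring)
  refine growth_or_decay_of_deriv (fun r hr => (hplus r hr).norm_sq)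
    (fun r hr => (hminus r hr).norm_sq) (fun r hr => (hS r hr).const_mul m)
    (fun r => by positivity) (fun r _ => by positivity)
    (fun r hr => le_two_mul_inner_mul_add hm.le (hre r hr) (herr r hr _ (norm_add_le _ _)))
    (fun r hr => ?_)
  have hle := le_two_mul_inner_mul_add hm.le (hre r hr)
    ((herr r hr (-(q r - k r ^ 2 - k' r)) ((norm_neg _).trans_le (norm_sub_le _ _))).trans_eq
      (congrArg _ (add_comm _ _)))
  rw [inner_neg_right]
  linarith

theorem growth_or_decay (h : IsLiouvilleGreen u v q k k' S m) :
    (fun r => Real.exp (m * S r / 2)) =O[atTop] (k * u) ∨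
      (k * u) =O[atTop] fun r => Real.exp (-(m * S r) / 2) := by
  have hexp : ∀ x : ℝ, ‖Real.exp (x / 2) ^ 2‖ = Real.exp x := fun x => by
    rw [Real.exp_half, Real.sq_sqrt (Real.exp_pos x).le, Real.norm_of_nonneg (Real.exp_pos x).le]
  refine h.norm_sq_growth_or_decay.imp ?_ ?_
  · rintro ⟨C, hC, hgrow⟩
    refine .of_pow two_ne_zero (.of_bound (16 / C) (hgrow.mono fun r hr => ?_))
    have htri := pow_le_pow_left₀ (abs_nonneg _)
      (abs_norm_sub_norm_le (v r + k r * u r) (v r - k r * u r)) 2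
    rw [norm_add_sub_sub, sq_abs] at htri
    rw [Pi.pow_apply, hexp, Pi.pow_apply, Pi.mul_apply, norm_pow, div_mul_eq_mul_div,
      le_div_iff₀' hC]
    linarith [sq_nonneg (‖v r + k r * u r‖ - 2 * ‖v r - k r * u r‖),
      sq_nonneg ‖v r + k r * u r‖]
  · rintro ⟨C, hdecay⟩
    refine .of_pow two_ne_zero (.of_bound (5 / 2 * C) (hdecay.mono fun r hr => ?_))
    have htri := pow_le_pow_left₀ (norm_nonneg _)
      (norm_sub_le (v r + k r * u r) (v r - k r * u r)) 2
    rw [norm_add_sub_sub] at htri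
    rw [Pi.pow_apply, Pi.mul_apply, norm_pow, Pi.pow_apply, hexp]
    linarith [hr.1, hr.2, sq_nonneg (‖v r + k r * u r‖ - ‖v r - k r * u r‖)]

end IsLiouvilleGreen

end LiouvilleGreen

lemma isLittleO_rpow_rpow {s t : ℝ} (hst : s < t) :
    (fun r : ℝ => r ^ s) =o[atTop] fun r : ℝ => r ^ t := by
  refine (isLittleO_iff_tendsto' ?_).2 ?_
  · filter_upwards [eventually_gt_atTop 0] with r hr h
    exact absurd h (Real.rpow_pos_of_pos hr t).ne'
  · refine (tendsto_rpow_neg_atTop (sub_pos.2 hst)).congr' ?_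
    filter_upwards [eventually_gt_atTop 0] with r hr
    rw [neg_sub, Real.rpow_sub hr]

lemma isLittleO_rpow_exp_mul_rpow (s : ℝ) {ρ c : ℝ} (hρ : 0 < ρ) (hc : 0 < c) :
    (fun r : ℝ => r ^ s) =o[atTop] fun r => Real.exp (c * r ^ ρ) := by
  refine ((isLittleO_rpow_exp_pos_mul_atTop (s / ρ) hc).comp_tendsto
    (tendsto_rpow_atTop hρ)).congr' ?_ .rfl
  filter_upwards [eventually_gt_atTop 0] with r hr
  rw [Function.comp_apply, ← Real.rpow_mul hr.le, mul_div_cancel₀ s hρ.ne']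

section PowerFrequency

variable {u v q : ℝ → ℂ} {e : ℂ} {ρ : ℝ}

lemma norm_mul_rpow (he : ‖e‖ = 1) {r : ℝ} (hr : 0 ≤ r) (s : ℝ) :
    ‖e * (r ^ s : ℝ)‖ = r ^ s := by
  rw [norm_mul, he, one_mul, Complex.norm_real, Real.norm_of_nonneg (Real.rpow_nonneg hr s)]

theorem isLiouvilleGreen_rpow (hρ : 0 < ρ)
    (hu : ∀ᶠ r in atTop, HasDerivAt u (v r) r) (hv : ∀ᶠ r in atTop, HasDerivAt v (q r * u r) r)
    (he : ‖e‖ = 1) (hre : 0 < e.re) (hq : q ~[atTop] fun r => (e * (r ^ (ρ - 1) : ℝ)) ^ 2) :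
    IsLiouvilleGreen u v q (fun r => e * (r ^ (ρ - 1) : ℝ))
      (fun r => e * ((ρ - 1) * r ^ (ρ - 1 - 1) : ℝ)) (fun r => r ^ ρ / ρ) e.re where
  pos := hre
  hasDerivAt_u := hu
  hasDerivAt_v := hv
  hasDerivAt_k := (eventually_gt_atTop 0).mono fun r hr =>
    (Real.hasDerivAt_rpow_const (.inl hr.ne')).ofReal_comp.const_mul e
  hasDerivAt_S := (eventually_gt_atTop 0).mono fun r hr => by
    rw [norm_mul_rpow he hr.le]
    exact ((Real.hasDerivAt_rpow_const (.inl hr.ne')).div_const ρ).congr_deriv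
      (mul_div_cancel_left₀ _ hρ.ne')
  mul_norm_le_re := (eventually_ge_atTop 0).mono fun r hr => by
    rw [norm_mul_rpow he hr, Complex.re_mul_ofReal]
  isEquivalent := hq
  isLittleO := by
    have hlt : ρ - 1 - 1 < (ρ - 1) + (ρ - 1) := by linarith
    refine .of_norm_norm (((isLittleO_rpow_rpow hlt).const_mul_left |ρ - 1|).congr' ?_ ?_) <;>
      filter_upwards [eventually_gt_atTop 0] with r hr
    · rw [Complex.ofReal_mul, mul_left_comm, norm_mul, norm_mul_rpow he hr.le, Complex.norm_real,
        Real.norm_eq_abs]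
    · rw [Pi.pow_apply, norm_pow, norm_mul_rpow he hr.le, sq, Real.rpow_add hr]

theorem tendsto_norm_atTop_or_isBigO_exp_neg (hρ : 1 ≤ ρ)
    (hu : ∀ᶠ r in atTop, HasDerivAt u (v r) r) (hv : ∀ᶠ r in atTop, HasDerivAt v (q r * u r) r)
    (he : ‖e‖ = 1) (hre : 0 < e.re) (hq : q ~[atTop] fun r => (e * (r ^ (ρ - 1) : ℝ)) ^ 2) :
    Tendsto (fun r => ‖u r‖) atTop atTop ∨
      u =O[atTop] fun r => Real.exp (-(e.re / (2 * ρ) * r ^ ρ)) := by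
  have hρ₀ : 0 < ρ := by linarith
  have hS : ∀ r : ℝ, e.re * (r ^ ρ / ρ) / 2 = e.re / (2 * ρ) * r ^ ρ := fun r => by ring
  refine (isLiouvilleGreen_rpow hρ₀ hu hv he hre hq).growth_or_decay.imp ?_ ?_
  · intro hgrow
    simp only [hS] at hgrow
    rw [← isLittleO_one_left_iff ℝ]
    have hlo := (isLittleO_rpow_exp_mul_rpow (ρ - 1) hρ₀
      (by positivity : 0 < e.re / (2 * ρ))).trans_isBigO hgrow
    refine isLittleO_iff.2 fun c hc => ?_
    filter_upwards [eventually_gt_atTop 0, hlo.def hc] with r hr hle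
    have hpow := Real.rpow_pos_of_pos hr (ρ - 1)
    rw [Pi.mul_apply, norm_mul, norm_mul_rpow he hr.le, Real.norm_of_nonneg hpow.le,
      mul_left_comm] at hle
    rw [norm_one]
    exact le_of_mul_le_mul_left ((mul_one _).trans_le hle) hpow
  · intro hdecay
    simp only [neg_div, hS] at hdecay
    refine .trans (.of_bound' ?_) hdecay
    filter_upwards [eventually_ge_atTop 1] with r hr
    rw [Pi.mul_apply, norm_mul, norm_mul_rpow he (by linarith)]
    exact le_mul_of_one_le_left (norm_nonneg _) (Real.one_le_rpow hr (by linarith))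

end PowerFrequency

lemma norm_le_mul_exp_of_norm_deriv_le {E : Type*} [NormedAddCommGroup E] [NormedSpace ℝ E]
    {u v w : ℝ → E} {ω a b C : ℝ} (hω : 1 ≤ ω) (hab : a ≤ b)
    (hu : ∀ t ∈ Set.Icc a b, HasDerivAt u (v t) t) (hv : ∀ t ∈ Set.Icc a b, HasDerivAt v (w t) t)
    (hw : ∀ t ∈ Set.Icc a b, ‖w t‖ ≤ ω ^ 2 * ‖u t‖) (hua : ‖u a‖ ≤ C) (hva : ‖v a‖ ≤ C) :
    ‖u b‖ ≤ C * Real.exp (ω * (b - a)) := by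
  have hω₀ : 0 < ω := by linarith
  have hC : 0 ≤ C := (norm_nonneg _).trans hua
  have hderiv : ∀ t ∈ Set.Icc a b, HasDerivAt (fun t => (v t, ω • u t)) (w t, ω • v t) t :=
    fun t ht => (hv t ht).prodMk ((hu t ht).const_smul ω)
  have hbound : ∀ t ∈ Set.Icc a b, ‖(w t, ω • v t)‖ ≤ ω * ‖(v t, ω • u t)‖ + 0 := by
    intro t ht
    rw [add_zero, Prod.norm_mk, Prod.norm_mk, norm_smul, norm_smul, Real.norm_of_nonneg hω₀.le,
      mul_max_of_nonneg _ _ hω₀.le, ← mul_assoc, ← sq, max_comm]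
    exact max_le_max le_rfl (hw t ht)
  have hinit : ‖(v a, ω • u a)‖ ≤ ω * C := by
    rw [Prod.norm_mk, norm_smul, Real.norm_of_nonneg hω₀.le]
    exact max_le (hva.trans (le_mul_of_one_le_left hC hω)) (by gcongr)
  have hgronwall := norm_le_gronwallBound_of_norm_deriv_right_le
    (fun t ht => (hderiv t ht).continuousAt.continuousWithinAt)
    (fun t ht => (hderiv t (Set.Ico_subset_Icc_self ht)).hasDerivWithinAt) hinit
    (fun t ht => hbound t (Set.Ico_subset_Icc_self ht)) b (Set.right_mem_Icc.2 hab)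
  rw [gronwallBound_ε0, mul_assoc] at hgronwall
  refine le_of_mul_le_mul_left (le_trans ?_ hgronwall) hω₀
  exact (norm_smul_of_nonneg hω₀.le (u b)).ge.trans (norm_snd_le (v b, ω • u b))

lemma isBigO_principal_of_inf_cocompact {X E F : Type*} [TopologicalSpace X]
    [NormedAddCommGroup E] [NormedAddCommGroup F] {f : X → E} {g : X → F} {s : Set X}
    (hs : IsClosed s) (hf : ContinuousOn f s) (hg : ContinuousOn g s) (hg₀ : ∀ x ∈ s, g x ≠ 0)
    (h : f =O[cocompact X ⊓ 𝓟 s] g) : f =O[𝓟 s] g := by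
  obtain ⟨c, hc⟩ := h.bound
  obtain ⟨K, hK, hKc⟩ := mem_cocompact.1 (eventually_inf_principal.1 hc)
  have hsub : K ∩ s ⊆ s := Set.inter_subset_right
  have hcompact : f =O[𝓟 (K ∩ s)] g :=
    ((hf.mono hsub).isBigO_principal (hK.inter_right hs) (by simp : ‖(1 : ℝ)‖ ≠ 0)).trans
      ((hg.mono hsub).isBigO_rev_principal (hK.inter_right hs) (fun x hx => hg₀ x hx.2) _)
  have houter : f =O[𝓟 (s \ K)] g :=
    isBigO_principal.2 ⟨c, fun x hx => hKc hx.2 hx.1⟩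
  refine (hcompact.sup houter).mono ?_
  rw [sup_principal, principal_mono]
  exact fun x hx => (em (x ∈ K)).imp (⟨·, hx⟩) (⟨hx, ·⟩)

lemma isBigO_principal_Ici_of_isBigO_atTop {E F : Type*} [NormedAddCommGroup E]
    [NormedAddCommGroup F] {f : ℝ → E} {g : ℝ → F} (a : ℝ) (hf : Continuous f) (hg : Continuous g)
    (hg₀ : ∀ r, g r ≠ 0) (h : f =O[atTop] g) : f =O[𝓟 (Set.Ici a)] g := by
  refine isBigO_principal_of_inf_cocompact isClosed_Ici hf.continuousOn hg.continuousOn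
    (fun r _ => hg₀ r) (h.mono ?_)
  rw [cocompact_eq_atBot_atTop, inf_sup_right, (disjoint_atBot_principal_Ici a).eq_bot, bot_sup_eq]
  exact inf_le_left

lemma hasDerivAt_comp_ofReal_mul_s10 {f : ℂ → ℂ} (hf : Differentiable ℂ f) (w : ℂ) (r : ℝ) :
    HasDerivAt (fun t : ℝ => f (t * w)) (deriv f (r * w) * w) r :=
  ((hf _).hasDerivAt.comp (r : ℂ) (hasDerivAt_mul_const w)).comp_ofReal

section EntireSolution

variable {Q y : ℂ → ℂ} {ρ : ℝ}

lemma hasDerivAt_deriv_comp_ofReal_mul (hy : Differentiable ℂ y)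
    (hode : ∀ z, deriv (deriv y) z = Q z * y z) (w : ℂ) (r : ℝ) :
    HasDerivAt (fun t : ℝ => deriv y (t * w) * w) (w ^ 2 * Q (r * w) * y (r * w)) r :=
  ((hasDerivAt_comp_ofReal_mul_s10 hy.deriv w r).mul_const w).congr_deriv (by rw [hode]; ring)

/- Grönwall's inequality is applied on `[R, r]` with the frequency frozen at its largest value
`K * r ^ (ρ - 1)`. -/
theorem norm_le_exp_rpow_on_ray {R K C r : ℝ} {w : ℂ} (hρ : 1 ≤ ρ) (hy : Differentiable ℂ y)
    (hode : ∀ z, deriv (deriv y) z = Q z * y z) (hR : 1 ≤ R) (hK : 1 ≤ K)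
    (hQ : ∀ z, R ≤ ‖z‖ → ‖Q z‖ ≤ (K * ‖z‖ ^ (ρ - 1)) ^ 2) (hw : ‖w‖ = 1)
    (hyC : ‖y (R * w)‖ ≤ C) (hyC' : ‖deriv y (R * w)‖ ≤ C) (hr : R ≤ r) :
    ‖y (r * w)‖ ≤ C * Real.exp (K * r ^ ρ) := by
  have hr₀ : 0 < r := by linarith
  have hC : 0 ≤ C := (norm_nonneg _).trans hyC
  have hρ₁ : 0 ≤ ρ - 1 := by linarith
  have hω : 1 ≤ K * r ^ (ρ - 1) :=
    one_le_mul_of_one_le_of_one_le hK (Real.one_le_rpow (hR.trans hr) hρ₁)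
  have hQ' : ∀ t ∈ Set.Icc R r,
      ‖w ^ 2 * Q (t * w) * y (t * w)‖ ≤ (K * r ^ (ρ - 1)) ^ 2 * ‖y (t * w)‖ := by
    intro t ht
    have ht₀ : 0 ≤ t := by linarith [ht.1]
    have htw : ‖(t : ℂ) * w‖ = t := by rw [norm_mul, hw, mul_one, Complex.norm_of_nonneg ht₀]
    rw [norm_mul, norm_mul, norm_pow, hw, one_pow, one_mul]
    have hQt := hQ (t * w) (htw.symm ▸ ht.1)
    rw [htw] at hQt
    gcongr
    exact hQt.trans (by gcongr; exact ht.2)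
  refine (norm_le_mul_exp_of_norm_deriv_le hω hr
    (fun t _ => hasDerivAt_comp_ofReal_mul_s10 hy w t)
    (fun t _ => hasDerivAt_deriv_comp_ofReal_mul hy hode w t) hQ' hyC
    (by rwa [norm_mul, hw, mul_one])).trans ?_
  refine mul_le_mul_of_nonneg_left (Real.exp_le_exp.2 ?_) hC
  calc K * r ^ (ρ - 1) * (r - R) ≤ K * r ^ (ρ - 1) * r := by gcongr; linarith
    _ = K * r ^ ρ := by rw [mul_assoc, ← Real.rpow_add_one hr₀.ne', sub_add_cancel]

theorem isBigO_exp_norm_rpow (hρ : 1 ≤ ρ) (hy : Differentiable ℂ y)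
    (hode : ∀ z, deriv (deriv y) z = Q z * y z)
    (hQ : Q =O[cobounded ℂ] fun z => (‖z‖ ^ (ρ - 1)) ^ 2) :
    ∃ M, y =O[⊤] fun z => Real.exp (M * ‖z‖ ^ ρ) := by
  obtain ⟨L, hL⟩ := hQ.bound
  obtain ⟨R₀, -, hR₀⟩ := hasBasis_cobounded_norm.eventually_iff.1 hL
  set R := max R₀ 1
  set K := max L 1
  have hQK : ∀ z, R ≤ ‖z‖ → ‖Q z‖ ≤ (K * ‖z‖ ^ (ρ - 1)) ^ 2 := by
    intro z hz
    refine (hR₀ ((le_max_left _ _).trans hz)).trans ?_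
    have hLK : L ≤ K ^ 2 := (le_max_left _ _).trans (le_self_pow₀ (le_max_right _ _) two_ne_zero)
    rw [mul_pow, Real.norm_of_nonneg (by positivity)]
    gcongr
  obtain ⟨C, hC⟩ := (isCompact_sphere (0 : ℂ) R).exists_bound_of_continuousOn
    (hy.continuous.prodMk hy.deriv.continuous).continuousOn
  refine ⟨K, ?_⟩
  rw [← principal_univ]
  refine isBigO_principal_of_inf_cocompact isClosed_univ hy.continuous.continuousOn
    (((continuous_norm.rpow_const fun _ => .inr (by linarith)).const_mul K).rexp.continuousOn)
    (fun z _ => (Real.exp_pos _).ne') ?_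
  rw [principal_univ, inf_top_eq, ← Metric.cobounded_eq_cocompact]
  refine .of_bound C (hasBasis_cobounded_norm.eventually_iff.2 ⟨R, trivial, fun z hz => ?_⟩)
  have hsphere : (R : ℂ) * Complex.exp (arg z * I) ∈ Metric.sphere (0 : ℂ) R := by
    rw [mem_sphere_zero_iff_norm, norm_mul, Complex.norm_exp_ofReal_mul_I, mul_one,
      Complex.norm_of_nonneg (by positivity)]
  have hCR := hC _ hsphere
  have hz' := norm_le_exp_rpow_on_ray hρ hy hode (le_max_right _ _) (le_max_right _ _) hQK
    (Complex.norm_exp_ofReal_mul_I (arg z)) ((norm_fst_le _).trans hCR)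
    ((norm_snd_le _).trans hCR) hz
  rwa [Complex.norm_mul_exp_arg_mul_I, ← Real.norm_of_nonneg (Real.exp_pos (K * ‖z‖ ^ ρ)).le] at hz'

end EntireSolution

section Sector

variable {y : ℂ → ℂ} {ρ M A B : ℝ}

lemma re_sub_mul_I_mul_exp (A B ρ : ℝ) (ζ : ℂ) :
    ((A - B * I) * Complex.exp (ρ * ζ)).re =
      (A * Real.cos (ρ * ζ.im) + B * Real.sin (ρ * ζ.im)) * Real.exp ζ.re ^ ρ := by
  rw [← Real.exp_mul, mul_comm ζ.re, Complex.mul_re, Complex.exp_re, Complex.exp_im]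
  simp only [Complex.sub_re, Complex.sub_im, Complex.re_ofReal_mul, Complex.im_ofReal_mul,
    Complex.ofReal_re, Complex.ofReal_im, Complex.I_re, Complex.I_im]
  ring

lemma norm_comp_exp_mul_exp (y : ℂ → ℂ) (A B ρ : ℝ) (ζ : ℂ) :
    ‖y (Complex.exp ζ) * Complex.exp (-((A - B * I) * Complex.exp (ρ * ζ)))‖ =
      ‖y (Real.exp ζ.re * Complex.exp (ζ.im * I))‖ * Real.exp
        (-((A * Real.cos (ρ * ζ.im) + B * Real.sin (ρ * ζ.im)) * Real.exp ζ.re ^ ρ)) := by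
  rw [norm_mul, Complex.norm_exp, Complex.neg_re, re_sub_mul_I_mul_exp, Complex.ofReal_exp,
    ← Complex.exp_add, Complex.re_add_im]

lemma isBigO_comp_exp_mul_exp (hρ : 0 ≤ ρ) (A B : ℝ)
    (hgrow : y =O[⊤] fun z => Real.exp (M * ‖z‖ ^ ρ)) :
    ∃ K, (fun ζ => y (Complex.exp ζ) * Complex.exp (-((A - B * I) * Complex.exp (ρ * ζ))))
      =O[⊤] fun ζ => Real.exp (K * Real.exp (ρ * |ζ.re|)) := by
  have hy : (fun ζ => y (Complex.exp ζ)) =O[⊤]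
      fun ζ => Real.exp (|M| * Real.exp (ρ * |ζ.re|)) := by
    refine (hgrow.comp_tendsto tendsto_top).trans (.of_bound' (.of_forall fun ζ => ?_))
    rw [Function.comp_apply, Complex.norm_exp, ← Real.exp_mul, mul_comm ζ.re,
      Real.norm_of_nonneg (Real.exp_pos _).le, Real.norm_of_nonneg (Real.exp_pos _).le]
    gcongr
    exacts [le_abs_self M, le_abs_self _]
  have hcomparison : (fun ζ => Complex.exp (-((A - B * I) * Complex.exp (ρ * ζ)))) =O[⊤]
      fun ζ => Real.exp (‖A - B * I‖ * Real.exp (ρ * |ζ.re|)) := by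
    refine .of_bound' (.of_forall fun ζ => (Complex.norm_exp_le_exp_norm _).trans ?_)
    rw [norm_neg, norm_mul, Complex.norm_exp, Complex.re_ofReal_mul,
      Real.norm_of_nonneg (Real.exp_pos _).le]
    gcongr
    exact le_abs_self _
  exact ⟨|M| + ‖A - B * I‖, (hy.mul hcomparison).congr_right fun ζ => by
    rw [← Real.exp_add, add_mul]⟩

/- Phragmén–Lindelöf for the quotient of `y` by `exp ((A - B i) z ^ ρ)`, in the coordinate
`ζ = log z`, which makes `z ^ ρ = exp (ρ ζ)` entire and the sector a horizontal strip. -/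
theorem norm_le_exp_of_sector (hρ : 0 ≤ ρ) (hy : Differentiable ℂ y)
    (hgrow : y =O[⊤] fun z => Real.exp (M * ‖z‖ ^ ρ)) {a b C : ℝ} (hab : ρ < Real.pi / (b - a))
    (hbound : ∀ r : ℝ, 0 < r → ∀ θ : ℝ, θ = a ∨ θ = b → ‖y (r * Complex.exp (θ * I))‖ ≤
      C * Real.exp ((A * Real.cos (ρ * θ) + B * Real.sin (ρ * θ)) * r ^ ρ))
    {r θ : ℝ} (hr : 0 < r) (hθ : θ ∈ Set.Icc a b) :
    ‖y (r * Complex.exp (θ * I))‖ ≤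
      C * Real.exp ((A * Real.cos (ρ * θ) + B * Real.sin (ρ * θ)) * r ^ ρ) := by
  set f : ℂ → ℂ := fun ζ =>
    y (Complex.exp ζ) * Complex.exp (-((A - B * I) * Complex.exp (ρ * ζ))) with hf
  have hf_le : ∀ ζ : ℂ, ‖f ζ‖ ≤ C ↔ ‖y (Real.exp ζ.re * Complex.exp (ζ.im * I))‖ ≤
      C * Real.exp ((A * Real.cos (ρ * ζ.im) + B * Real.sin (ρ * ζ.im)) * Real.exp ζ.re ^ ρ) :=
    fun ζ => by
      rw [hf, norm_comp_exp_mul_exp, Real.exp_neg, ← div_eq_mul_inv, div_le_iff₀ (Real.exp_pos _)]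
  have hfd : Differentiable ℂ f := (hy.comp Complex.differentiable_exp).mul (by fun_prop)
  have hbd : ∀ ζ : ℂ, ζ.im = a ∨ ζ.im = b → ‖f ζ‖ ≤ C := fun ζ hζ =>
    (hf_le ζ).2 (hbound _ (Real.exp_pos _) _ hζ)
  obtain ⟨K, hK⟩ := isBigO_comp_exp_mul_exp hρ A B hgrow
  have hstrip := (hf_le _).1 <| PhragmenLindelof.horizontal_strip
    (z := (Real.log r : ℝ) + (θ : ℝ) * I) hfd.diffContOnCl ⟨ρ, hab, K, hK.mono le_top⟩
    (fun z hz => hbd z (.inl hz)) (fun z hz => hbd z (.inr hz))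
    (by simpa using hθ.1) (by simpa using hθ.2)
  simpa [Real.exp_log hr] using hstrip

/- The comparison exponent interpolates between the decay rate `-c` on the ray `θ = 0` and the
global growth rate `M` on the ray `ρ * θ = π / 2`. -/
theorem norm_le_exp_of_decay_of_nonneg (hρ : 0 < ρ) (hy : Differentiable ℂ y)
    (hgrow : y =O[⊤] fun z => Real.exp (M * ‖z‖ ^ ρ)) {c C : ℝ}
    (hdecay : ∀ r : ℝ, 0 < r → ‖y r‖ ≤ C * Real.exp (-(c * r ^ ρ))) :
    ∃ C', ∀ r θ : ℝ, 0 < r → 0 ≤ θ → ρ * θ ≤ Real.pi / 2 → ‖y (r * Complex.exp (θ * I))‖ ≤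
      C' * Real.exp ((-c * Real.cos (ρ * θ) + M * Real.sin (ρ * θ)) * r ^ ρ) := by
  obtain ⟨D, hD⟩ := isBigO_top.1 hgrow
  have hb : ρ * (Real.pi / (2 * ρ)) = Real.pi / 2 := by field_simp
  have hlt : ρ < Real.pi / (Real.pi / (2 * ρ) - 0) := by
    rw [sub_zero, div_div_cancel₀ Real.pi_ne_zero]
    linarith
  refine ⟨max C D, fun r θ hr hθ₀ hθ => norm_le_exp_of_sector hρ.le hy hgrow hlt ?_ hr
    ⟨hθ₀, le_of_mul_le_mul_left (hθ.trans_eq hb.symm) hρ⟩⟩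
  rintro s hs _ (rfl | rfl)
  · rw [Complex.ofReal_zero, zero_mul, Complex.exp_zero, mul_one, mul_zero, Real.cos_zero,
      Real.sin_zero, mul_one, mul_zero, add_zero, neg_mul]
    exact (hdecay s hs).trans (by gcongr; exact le_max_left _ _)
  · have hs' := hD (s * Complex.exp ((Real.pi / (2 * ρ) : ℝ) * I))
    rw [norm_mul, Complex.norm_exp_ofReal_mul_I, mul_one, Complex.norm_of_nonneg hs.le,
      Real.norm_of_nonneg (Real.exp_pos _).le] at hs'
    rw [hb, Real.cos_pi_div_two, Real.sin_pi_div_two, mul_zero, zero_add, mul_one]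
    exact hs'.trans (by gcongr; exact le_max_right _ _)

theorem tendsto_zero_of_decay (hρ : 0 < ρ) (hy : Differentiable ℂ y)
    (hgrow : y =O[⊤] fun z => Real.exp (M * ‖z‖ ^ ρ)) {c θ : ℝ}
    (hdecay : (fun r : ℝ => y r) =O[atTop] fun r => Real.exp (-(c * r ^ ρ)))
    (hθ : ρ * |θ| ≤ Real.pi / 2)
    (hneg : M * Real.sin (ρ * |θ|) < c * Real.cos (ρ * |θ|)) :
    Tendsto (fun r : ℝ => y (r * Complex.exp (θ * I))) atTop (𝓝 0) := by
  wlog hθ₀ : 0 ≤ θ generalizing y θ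
  · have hconj : Differentiable ℂ (conj ∘ y ∘ conj) := fun z =>
      differentiableAt_conj_conj_iff.2 (hy _)
    have hgrow_conj : (conj ∘ y ∘ conj) =O[⊤] fun z => Real.exp (M * ‖z‖ ^ ρ) :=
      .of_norm_left <| ((hgrow.comp_tendsto (k := conj) tendsto_top).norm_left).congr
        (fun z => (norm_conj _).symm) (fun z => by rw [Function.comp_apply, norm_conj])
    have hdecay_conj : (fun r : ℝ => (conj ∘ y ∘ conj) r) =O[atTop]
        fun r => Real.exp (-(c * r ^ ρ)) :=
      .of_norm_left <| hdecay.norm_left.congr_left fun r => by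
        rw [Function.comp_apply, Function.comp_apply, norm_conj, Complex.conj_ofReal]
    have hlim := this hconj hgrow_conj hdecay_conj (θ := -θ) (by rwa [abs_neg]) (by rwa [abs_neg])
      (by linarith)
    refine ((continuous_conj.tendsto' 0 0 (map_zero _)).comp hlim).congr fun r => ?_
    simp [← Complex.exp_conj]
  rw [abs_of_nonneg hθ₀] at hθ hneg
  obtain ⟨C, hC⟩ := isBigO_principal.1 <| isBigO_principal_Ici_of_isBigO_atTop 0
    (hy.continuous.comp continuous_ofReal)
    (((Real.continuous_rpow_const hρ.le).const_mul c).neg.rexp)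
    (fun r => (Real.exp_pos _).ne') hdecay
  obtain ⟨C', hC'⟩ := norm_le_exp_of_decay_of_nonneg hρ hy hgrow (fun r hr => by
    simpa using hC r hr.le)
  have hlim : Tendsto (fun r : ℝ => C' * Real.exp
      ((-c * Real.cos (ρ * θ) + M * Real.sin (ρ * θ)) * r ^ ρ)) atTop (𝓝 (C' * 0)) :=
    (Real.tendsto_exp_atBot.comp ((tendsto_rpow_atTop hρ).const_mul_atTop_of_neg
      (by linarith))).const_mul C'
  rw [mul_zero] at hlim
  exact squeeze_zero_norm' ((eventually_gt_atTop 0).mono fun r hr => hC' r θ hr hθ₀ hθ) hlim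

theorem tendsto_zero_of_decay_on_ray (hρ : 0 < ρ) (hy : Differentiable ℂ y)
    (hgrow : y =O[⊤] fun z => Real.exp (M * ‖z‖ ^ ρ)) {c θ₀ θ : ℝ}
    (hdecay : (fun r : ℝ => y (r * Complex.exp (θ₀ * I))) =O[atTop]
      fun r => Real.exp (-(c * r ^ ρ)))
    (hθ : ρ * |θ - θ₀| ≤ Real.pi / 2)
    (hneg : M * Real.sin (ρ * |θ - θ₀|) < c * Real.cos (ρ * |θ - θ₀|)) :
    Tendsto (fun r : ℝ => y (r * Complex.exp (θ * I))) atTop (𝓝 0) := by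
  have hgrow_rotated : (fun z => y (z * Complex.exp (θ₀ * I))) =O[⊤]
      fun z => Real.exp (M * ‖z‖ ^ ρ) :=
    (hgrow.comp_tendsto (k := fun z => z * Complex.exp (θ₀ * I)) tendsto_top).congr_right
      fun z => by rw [Function.comp_apply, norm_mul, Complex.norm_exp_ofReal_mul_I, mul_one]
  have hlim := tendsto_zero_of_decay hρ (hy.comp (differentiable_id.mul_const _)) hgrow_rotated
    hdecay hθ hneg
  refine hlim.congr fun r => ?_
  rw [Function.comp_apply, mul_assoc, ← Complex.exp_add, ← add_mul, ← Complex.ofReal_add,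
    sub_add_cancel]

lemma eventually_le_pi_div_two_and_mul_sin_lt {ι : Type*} {l : Filter ι} {φ c : ι → ℝ}
    {c₀ : ℝ} (hφ : Tendsto φ l (𝓝 0)) (hc : Tendsto c l (𝓝 c₀)) (hc₀ : 0 < c₀) :
    ∀ᶠ i in l, φ i ≤ Real.pi / 2 ∧ M * Real.sin (φ i) < c i * Real.cos (φ i) := by
  have hsin : Tendsto (fun i => M * Real.sin (φ i)) l (𝓝 (M * Real.sin 0)) :=
    ((Real.continuous_sin.tendsto 0).comp hφ).const_mul M
  have hcos : Tendsto (fun i => c i * Real.cos (φ i)) l (𝓝 (c₀ * Real.cos 0)) :=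
    hc.mul ((Real.continuous_cos.tendsto 0).comp hφ)
  exact (hφ.eventually_le_const Real.pi_div_two_pos).and (hsin.eventually_lt hcos (by simpa))

theorem forall_tendsto_zero_or_forall_tendsto_atTop (hρ : 0 < ρ) (hy : Differentiable ℂ y)
    (hgrow : y =O[⊤] fun z => Real.exp (M * ‖z‖ ^ ρ)) {s : Set ℝ} (hs : IsPreconnected s)
    {c : ℝ → ℝ} (hc : ContinuousOn c s) (hc₀ : ∀ θ ∈ s, 0 < c θ)
    (hray : ∀ θ ∈ s, Tendsto (fun r : ℝ => ‖y (r * Complex.exp (θ * I))‖) atTop atTop ∨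
      (fun r : ℝ => y (r * Complex.exp (θ * I))) =O[atTop] fun r => Real.exp (-(c θ * r ^ ρ))) :
    (∀ θ ∈ s, Tendsto (fun r : ℝ => y (r * Complex.exp (θ * I))) atTop (𝓝 0)) ∨
      ∀ θ ∈ s, Tendsto (fun r : ℝ => ‖y (r * Complex.exp (θ * I))‖) atTop atTop := by
  set P : ℝ → Prop := fun θ => Tendsto (fun r : ℝ => y (r * Complex.exp (θ * I))) atTop (𝓝 0)
  have hdecay : ∀ θ ∈ s, P θ → (fun r : ℝ => y (r * Complex.exp (θ * I))) =O[atTop]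
      fun r => Real.exp (-(c θ * r ^ ρ)) := fun θ hθ hP =>
    (hray θ hθ).resolve_left (not_tendsto_atTop_of_tendsto_nhds hP.norm)
  have hlocal : ∀ x ∈ s, ∀ᶠ θ in 𝓝[s] x, (P x → P θ) ∧ (P θ → P x) := by
    intro x hx
    have hangle : Tendsto (fun θ => ρ * |θ - x|) (𝓝[s] x) (𝓝 0) :=
      (Continuous.tendsto' (by fun_prop) _ _ (by simp)).mono_left nhdsWithin_le_nhds
    filter_upwards [self_mem_nhdsWithin,
      eventually_le_pi_div_two_and_mul_sin_lt (M := M) hangle tendsto_const_nhds (hc₀ x hx),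
      eventually_le_pi_div_two_and_mul_sin_lt (M := M) hangle (hc x hx) (hc₀ x hx)]
      with θ hθ hfrom_x hfrom_θ
    rw [abs_sub_comm] at hfrom_θ
    exact ⟨fun hP => tendsto_zero_of_decay_on_ray hρ hy hgrow (hdecay x hx hP) hfrom_x.1 hfrom_x.2,
      fun hP => tendsto_zero_of_decay_on_ray hρ hy hgrow (hdecay θ hθ hP) hfrom_θ.1 hfrom_θ.2⟩
  by_cases hzero : ∃ θ₀ ∈ s, P θ₀
  · obtain ⟨θ₀, hθ₀, hP⟩ := hzero
    exact .inl fun θ hθ => hs.induction₂' (fun x θ => P x → P θ) hlocal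
      (fun _ _ _ _ _ _ hxy hyz => hyz ∘ hxy) hθ₀ hθ hP
  · refine .inr fun θ hθ => (hray θ hθ).resolve_right fun hO => hzero ⟨θ, hθ, ?_⟩
    exact tendsto_zero_of_decay_on_ray hρ hy hgrow hO
      (by simpa using Real.pi_div_two_pos.le) (by simpa using hc₀ θ hθ)

end Sector

/-- `y` is dominant in the Stokes sector `S_j`: it tends to infinity in modulus along every ray
in `S_j`. -/
def Dominant (n j : ℕ) (y : ℂ → ℂ) : Prop :=
  ∀ θ : ℝ, DirIn n j θ →
    Tendsto (fun r : ℝ => ‖y ((r : ℂ) * Complex.exp (θ * Complex.I))‖) atTop atTop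

lemma isPreconnected_setOf_dirIn (n j : ℕ) : IsPreconnected {θ | DirIn n j θ} :=
  (convex_ball (2 * Real.pi * j / n) (Real.pi / n)).isPreconnected

lemma DirIn.cos_pos {n j : ℕ} {θ : ℝ} (hθ : DirIn n j θ) :
    0 < Real.cos (n / 2 * θ - Real.pi * j) := by
  have hn : (0 : ℝ) < n := (div_pos_iff_of_pos_left Real.pi_pos).1 ((abs_nonneg _).trans_lt hθ)
  have hscale : n / 2 * θ - Real.pi * j = n / 2 * (θ - 2 * Real.pi * j / n) := by field_simp
  have habs : |n / 2 * θ - Real.pi * j| < Real.pi / 2 := by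
    rw [hscale, abs_mul, abs_of_pos (half_pos hn)]
    exact (mul_lt_mul_of_pos_left hθ (half_pos hn)).trans_eq (by field_simp)
  exact Real.cos_pos_of_mem_Ioo (abs_lt.1 habs)

lemma exp_half_mul_sub_sq (n j : ℕ) (θ : ℝ) :
    Complex.exp ((n / 2 * θ - Real.pi * j : ℝ) * I) ^ 2 = Complex.exp (θ * I) ^ n := by
  rw [← Complex.exp_nat_mul, ← Complex.exp_nat_mul, Complex.exp_eq_exp_iff_exists_int]
  exact ⟨-j, by push_cast; ring⟩

lemma rpow_half_sub_one_sq (d : ℕ) {r : ℝ} (hr : 0 ≤ r) :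
    (r ^ (((d + 2 : ℕ) : ℝ) / 2 - 1)) ^ 2 = r ^ d := by
  rw [← Real.rpow_mul_natCast hr, ← Real.rpow_natCast]
  push_cast
  ring_nf

section Schrodinger

variable {d : ℕ} {Q y : ℂ → ℂ}

lemma isEquivalent_comp_ray (hQ : Q ~[cobounded ℂ] fun z => z ^ d) (j : ℕ) (θ : ℝ) :
    (fun r : ℝ => Complex.exp (θ * I) ^ 2 * Q (r * Complex.exp (θ * I))) ~[atTop] fun r =>
      (Complex.exp (((d + 2 : ℕ) / 2 * θ - Real.pi * j : ℝ) * I) *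
        (r ^ (((d + 2 : ℕ) : ℝ) / 2 - 1) : ℝ)) ^ 2 := by
  set w := Complex.exp (θ * I) with hw
  have hlim : Tendsto (fun r : ℝ => (r : ℂ) * w) atTop (cobounded ℂ) := by
    rw [← tendsto_norm_atTop_iff_cobounded]
    refine tendsto_abs_atTop_atTop.congr fun r => ?_
    rw [norm_mul, hw, Complex.norm_exp_ofReal_mul_I, mul_one, Complex.norm_real, Real.norm_eq_abs]
  refine ((IsEquivalent.refl (u := fun _ => w ^ 2)).mul (hQ.comp_tendsto hlim)).congr_right ?_
  filter_upwards [eventually_ge_atTop 0] with r hr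
  rw [mul_pow, exp_half_mul_sub_sq, ← Complex.ofReal_pow, rpow_half_sub_one_sq d hr]
  simp only [Pi.mul_apply, Function.comp_apply, Complex.ofReal_pow]
  ring

theorem tendsto_norm_atTop_or_isBigO_exp_neg_of_dirIn (hQ : Q ~[cobounded ℂ] fun z => z ^ d)
    (hy : Differentiable ℂ y) (hode : ∀ z, deriv (deriv y) z = Q z * y z) {j : ℕ} {θ : ℝ}
    (hθ : DirIn (d + 2) j θ) :
    Tendsto (fun r : ℝ => ‖y (r * Complex.exp (θ * I))‖) atTop atTop ∨
      (fun r : ℝ => y (r * Complex.exp (θ * I))) =O[atTop] fun r : ℝ =>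
        Real.exp (-(Real.cos ((d + 2 : ℕ) / 2 * θ - Real.pi * j) / (2 * ((d + 2 : ℕ) / 2)) *
          r ^ (((d + 2 : ℕ) : ℝ) / 2))) := by
  have hre := Complex.exp_ofReal_mul_I_re ((d + 2 : ℕ) / 2 * θ - Real.pi * j)
  rw [← hre]
  exact tendsto_norm_atTop_or_isBigO_exp_neg (by push_cast; linarith [d.cast_nonneg (α := ℝ)])
    (.of_forall (hasDerivAt_comp_ofReal_mul_s10 hy _))
    (.of_forall (hasDerivAt_deriv_comp_ofReal_mul hy hode _))
    (Complex.norm_exp_ofReal_mul_I _) (hθ.cos_pos.trans_eq hre.symm) (isEquivalent_comp_ray hQ j θ)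

theorem stmt10_general (hQ : Q ~[cobounded ℂ] fun z => z ^ d) (hy : Differentiable ℂ y)
    (hode : ∀ z, deriv (deriv y) z = Q z * y z) (j : ℕ) :
    Subdominant (d + 2) j y ∨ Dominant (d + 2) j y := by
  have hρ : (1 : ℝ) ≤ (d + 2 : ℕ) / 2 := by push_cast; linarith [d.cast_nonneg (α := ℝ)]
  obtain ⟨M, hM⟩ := isBigO_exp_norm_rpow hρ hy hode <| hQ.isBigO.trans <| .of_bound' <|
    .of_forall fun z => by
      rw [rpow_half_sub_one_sq d (norm_nonneg z), norm_pow, norm_pow, norm_norm]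
  exact forall_tendsto_zero_or_forall_tendsto_atTop (by linarith) hy hM
    (isPreconnected_setOf_dirIn (d + 2) j) (Continuous.continuousOn (by fun_prop))
    (fun θ hθ => div_pos (DirIn.cos_pos hθ) (by linarith))
    (fun θ hθ => tendsto_norm_atTop_or_isBigO_exp_neg_of_dirIn hQ hy hode hθ)

end Schrodinger

lemma isEquivalent_Pol_sub {d : ℕ} (hd : d ≠ 0) (α : Fin (d - 1) → ℂ) (lam : ℂ) :
    (fun z => Pol d α z - lam) ~[cobounded ℂ] fun z => z ^ d := by
  have hpow : ∀ i < d, (fun z : ℂ => z ^ i) =o[cobounded ℂ] fun z => z ^ d := fun i hi =>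
    isLittleO_pow_pow_cobounded_of_lt hi
  have hlower : (fun z => ∑ i : Fin (d - 1), α i * z ^ ((i : ℕ) + 1) - lam * z ^ 0)
      =o[cobounded ℂ] fun z => z ^ d :=
    (IsLittleO.fun_sum fun i _ => (hpow _ (by omega)).const_mul_left (α i)).sub
      ((hpow 0 (Nat.pos_of_ne_zero hd)).const_mul_left lam)
  refine hlower.congr_left fun z => ?_
  simp only [Pol, Pi.sub_apply]
  ring

theorem stmt10 (d : ℕ) (hd : 2 ≤ d) (n : ℕ) (hn : n = d + 2)
    (α : Fin (d - 1) → ℂ) (lam : ℂ) (y : ℂ → ℂ)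
    (hy : IsSol d α lam y) (hy0 : y ≠ 0) (j : ℕ) (hj : j < n) :
    (∀ θ : ℝ, DirIn n j θ →
        Tendsto (fun r : ℝ => y ((r : ℂ) * Complex.exp (θ * Complex.I))) atTop (𝓝 0)) ∨
    (∀ θ : ℝ, DirIn n j θ →
        Tendsto (fun r : ℝ => ‖y ((r : ℂ) * Complex.exp (θ * Complex.I))‖) atTop atTop) := by
  subst hn
  exact stmt10_general (isEquivalent_Pol_sub (by omega) α lam) hy.1 hy.2 j
end

section
/- Let d ≥ 2 and n = d + 2. No nonzero solution of the Schrödinger equation with parameters (α, λ) is subdominant in two adjacent Stokes sectors: if y is a nonzero solution and j ∈ {0,…,n−1}, then y is not simultaneously subdominant in S_j and in S_{j+1 mod n}. -/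
open Complex Filter Topology

/-!
On a ray where the potential has positive real part, `‖y‖ ^ 2` is so convex that `y → 0` forces a
decay like `exp (-c * r ^ (d / 2 + 1))`, while Grönwall's inequality bounds every solution by
`exp (B * ‖z‖ ^ (d / 2 + 1))` in all directions. Subdominance in two adjacent sectors bounds `y` on
the edges of a sector that is bisected by such a ray and is slightly wider than `2 * π / n`. Opened
up to a half-plane by a power map, `y` has growth of order less than `2` there and decays faster
than every exponential on the bisector, so it vanishes by Phragmén–Lindelöf.
-/

open Asymptotics Bornology
open scoped Real

section DifferentialInequalities

variable {a b k δ : ℝ} {f f' f'' : ℝ → ℝ}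

theorem le_mul_exp_of_hasDerivAt_le (hab : a ≤ b)
    (hf : ∀ t ∈ Set.Icc a b, HasDerivAt f (f' t) t) (h : ∀ t ∈ Set.Icc a b, f' t ≤ k * f t) :
    f b ≤ f a * Real.exp (k * (b - a)) := by
  rw [← gronwallBound_ε0]
  exact le_gronwallBound_of_liminf_deriv_right_le (HasDerivAt.continuousOn hf)
    (fun t ht _ => (hf t (Set.Ico_subset_Icc_self ht)).hasDerivWithinAt.liminf_right_slope_le)
    le_rfl (fun t ht => by simpa using h t (Set.Ico_subset_Icc_self ht)) b (Set.right_mem_Icc.2 hab)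

theorem tendsto_atTop_of_le_deriv (hδ : 0 < δ) (hf : ∀ᶠ t in atTop, HasDerivAt f (f' t) t)
    (h : ∀ᶠ t in atTop, δ ≤ f' t) : Tendsto f atTop atTop := by
  obtain ⟨T, hT⟩ := eventually_atTop.1 (hf.and h)
  have hline : Tendsto (fun t => δ * (t - T) + f T) atTop atTop :=
    tendsto_atTop_add_const_right _ _
      ((tendsto_atTop_add_const_right _ (-T) tendsto_id).const_mul_atTop hδ)
  refine tendsto_atTop_mono' _ ?_ hline
  filter_upwards [eventually_ge_atTop T] with t ht
  have hslope := (convex_Ici T).mul_sub_le_image_sub_of_le_deriv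
    (HasDerivAt.continuousOn fun s hs => (hT s hs).1)
    (fun s hs => (hT s (interior_subset hs)).1.differentiableAt.differentiableWithinAt)
    (fun s hs => (hT s (interior_subset hs)).1.deriv ▸ (hT s (interior_subset hs)).2)
    T Set.self_mem_Ici t ht ht
  linarith

/- If `f' + k f` were positive at `a`, it would stay above a positive constant, since
`(f' + k f)' ≥ k (f' + k f)`; as `f → 0`, so would `f'`, and `f` would be unbounded. -/
theorem deriv_le_neg_mul_of_tendsto_zero (hk : 0 ≤ k) (hf : ∀ t ≥ a, HasDerivAt f (f' t) t)
    (hf' : ∀ t ≥ a, HasDerivAt f' (f'' t) t) (h : ∀ t ≥ a, k ^ 2 * f t ≤ f'' t)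
    (hlim : Tendsto f atTop (𝓝 0)) : f' a ≤ -k * f a := by
  by_contra! hlt
  set δ := f' a + k * f a
  have hδ0 : 0 < δ := by linarith
  have hgrow : ∀ t ≥ a, δ ≤ f' t + k * f t := fun t hat => by
    have hexp := le_mul_exp_of_hasDerivAt_le (k := k) hat
      (fun s hs => ((hf' s hs.1).add ((hf s hs.1).const_mul k)).neg)
      fun s hs => by simp only [Pi.neg_apply, Pi.add_apply]; linarith [h s hs.1]
    simp only [Pi.neg_apply, Pi.add_apply] at hexp
    have hone : 1 ≤ Real.exp (k * (t - a)) :=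
      Real.one_le_exp (mul_nonneg hk (sub_nonneg.2 hat))
    nlinarith
  have hsmall : ∀ᶠ t in atTop, k * f t < δ / 2 :=
    Tendsto.eventually_lt_const (half_pos hδ0) (by simpa using hlim.const_mul k)
  refine not_tendsto_nhds_of_tendsto_atTop (tendsto_atTop_of_le_deriv (half_pos hδ0)
    ((eventually_ge_atTop a).mono hf) ?_) 0 hlim
  filter_upwards [hsmall, eventually_ge_atTop a] with t ht hat
  linarith [hgrow t hat]

theorem le_mul_exp_neg_of_tendsto_zero (hk : 0 ≤ k) (hab : a ≤ b)
    (hf : ∀ t ≥ a, HasDerivAt f (f' t) t) (hf' : ∀ t ≥ a, HasDerivAt f' (f'' t) t)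
    (h : ∀ t ≥ a, k ^ 2 * f t ≤ f'' t) (hlim : Tendsto f atTop (𝓝 0)) :
    f b ≤ f a * Real.exp (-k * (b - a)) :=
  le_mul_exp_of_hasDerivAt_le hab (fun t ht => hf t ht.1) fun _ ht =>
    deriv_le_neg_mul_of_tendsto_zero hk (fun s hs => hf s (ht.1.trans hs))
      (fun s hs => hf' s (ht.1.trans hs)) (fun s hs => h s (ht.1.trans hs)) hlim

theorem norm_smul_prod_deriv_le_mul_exp {E : Type*} [NormedAddCommGroup E] [NormedSpace ℝ E]
    {u u' u'' : ℝ → E} (hk : 0 ≤ k) (hab : a ≤ b)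
    (hu : ∀ t ∈ Set.Icc a b, HasDerivAt u (u' t) t)
    (hu' : ∀ t ∈ Set.Icc a b, HasDerivAt u' (u'' t) t)
    (h : ∀ t ∈ Set.Icc a b, ‖u'' t‖ ≤ k ^ 2 * ‖u t‖) :
    ‖(k • u b, u' b)‖ ≤ ‖(k • u a, u' a)‖ * Real.exp (k * (b - a)) := by
  have hderiv : ∀ t ∈ Set.Icc a b,
      HasDerivAt (fun t => (k • u t, u' t)) (k • u' t, u'' t) t :=
    fun t ht => ((hu t ht).const_smul k).prodMk (hu' t ht)
  have hbound : ∀ t ∈ Set.Icc a b, ‖(k • u' t, u'' t)‖ ≤ k * ‖(k • u t, u' t)‖ := fun t ht => by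
    simp only [Prod.norm_mk, norm_smul, Real.norm_of_nonneg hk, mul_max_of_nonneg _ _ hk]
    rw [max_comm, ← mul_assoc, ← sq]
    exact max_le_max_right _ (h t ht)
  rw [← gronwallBound_ε0]
  exact norm_le_gronwallBound_of_norm_deriv_right_le (HasDerivAt.continuousOn hderiv)
    (fun t ht => (hderiv t (Set.Ico_subset_Icc_self ht)).hasDerivWithinAt) le_rfl
    (fun t ht => by simpa using hbound t (Set.Ico_subset_Icc_self ht)) b (Set.right_mem_Icc.2 hab)

theorem norm_sq_le_mul_exp_neg_of_tendsto_zero {E : Type*} [NormedAddCommGroup E]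
    [InnerProductSpace ℝ E] {u u' u'' : ℝ → E} (hk : 0 ≤ k) (hab : a ≤ b)
    (hu : ∀ t ≥ a, HasDerivAt u (u' t) t) (hu' : ∀ t ≥ a, HasDerivAt u' (u'' t) t)
    (h : ∀ t ≥ a, k ^ 2 * ‖u t‖ ^ 2 ≤ 2 * inner ℝ (u t) (u'' t))
    (hlim : Tendsto u atTop (𝓝 0)) :
    ‖u b‖ ^ 2 ≤ ‖u a‖ ^ 2 * Real.exp (-k * (b - a)) := by
  refine le_mul_exp_neg_of_tendsto_zero hk hab (fun t ht => (hu t ht).norm_sq)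
    (fun t ht => ((hu t ht).inner ℝ (hu' t ht)).const_mul 2) (fun t ht => ?_)
    (by simpa using hlim.norm.pow 2)
  linarith [h t ht, real_inner_self_nonneg (x := u' t)]

end DifferentialInequalities

section GrowthAndDecay

variable {g q : ℂ → ℂ} {s : ℝ}

theorem hasDerivAt_ofReal_mul (hg : Differentiable ℂ g) (e : ℂ) (t : ℝ) :
    HasDerivAt (fun t : ℝ => g (t * e)) (deriv g (t * e) * e) t := by
  have hray : HasDerivAt (fun t : ℝ => (t : ℂ) * e) e t := by
    simpa using (Complex.ofRealCLM.hasDerivAt (x := t)).mul_const e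
  exact (hg (t * e)).hasDerivAt.comp t hray

theorem inner_mul_self_right (z w : ℂ) : inner ℝ z (w * z) = w.re * ‖z‖ ^ 2 := by
  rw [Complex.inner, mul_assoc, mul_conj, re_mul_ofReal, normSq_eq_norm_sq]

theorem rpow_half_mul_self {x : ℝ} (hx : 0 ≤ x) (hs : s / 2 + 1 ≠ 0) :
    x ^ (s / 2) * x = x ^ (s / 2 + 1) := (Real.rpow_add_one' hx hs).symm

theorem rpow_half_sq {x : ℝ} (hx : 0 ≤ x) : (x ^ (s / 2)) ^ 2 = x ^ s := by
  rw [← Real.rpow_mul_natCast hx, Nat.cast_ofNat, div_mul_cancel₀ s two_ne_zero]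

theorem norm_ofReal_mul_le_of_deriv_deriv_eq (hg : Differentiable ℂ g)
    (hgq : ∀ z, deriv (deriv g) z = q z * g z) {e : ℂ} (he : ‖e‖ = 1) {M C R r : ℝ}
    (hR : 0 ≤ R) (hRr : R ≤ r) (hM : 1 ≤ M) (hq : ∀ w, R ≤ ‖w‖ → ‖w‖ ≤ r → ‖q w‖ ≤ M ^ 2)
    (hC : ∀ w, ‖w‖ = R → ‖g w‖ ≤ C ∧ ‖deriv g w‖ ≤ C) :
    ‖g (r * e)‖ ≤ C * Real.exp (M * (r - R)) := by
  have hM0 : 0 < M := one_pos.trans_le hM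
  have hnorm : ∀ t ≥ R, ‖(t : ℂ) * e‖ = t := fun t ht => by
    rw [norm_mul, he, mul_one, norm_real, Real.norm_of_nonneg (hR.trans ht)]
  have hinit : ‖(M • g (R * e), deriv g (R * e) * e)‖ ≤ M * C := by
    obtain ⟨hgC, hgC'⟩ := hC _ (hnorm R le_rfl)
    have hC0 : 0 ≤ C := (norm_nonneg _).trans hgC
    rw [Prod.norm_mk, norm_smul, Real.norm_of_nonneg hM0.le, norm_mul, he, mul_one]
    exact max_le (by gcongr) (hgC'.trans (le_mul_of_one_le_left hC0 hM))
  have hgrowth := norm_smul_prod_deriv_le_mul_exp hM0.le hRr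
    (fun t _ => hasDerivAt_ofReal_mul hg e t)
    (fun t _ => (hasDerivAt_ofReal_mul hg.deriv e t).mul_const e) fun t ht => by
      simp only [hgq, norm_mul, he, mul_one]
      gcongr
      exact hq _ (ht.1.trans_eq (hnorm t ht.1).symm) ((hnorm t ht.1).trans_le ht.2)
  refine le_of_mul_le_mul_left ?_ hM0
  calc M * ‖g (r * e)‖ = ‖M • g (r * e)‖ := by rw [norm_smul, Real.norm_of_nonneg hM0.le]
    _ ≤ ‖(M • g (R * e), deriv g (R * e) * e)‖ * Real.exp (M * (r - R)) :=
      (le_max_left _ _).trans hgrowth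
    _ ≤ M * (C * Real.exp (M * (r - R))) := by
      rw [← mul_assoc]
      gcongr

theorem norm_le_mul_exp_rpow_of_deriv_deriv_eq (hg : Differentiable ℂ g)
    (hgq : ∀ z, deriv (deriv g) z = q z * g z) (hs : 0 ≤ s) {K C R : ℝ} (hK : 1 ≤ K) (hR : 1 ≤ R)
    (hq : ∀ w, R ≤ ‖w‖ → ‖q w‖ ≤ K * ‖w‖ ^ s)
    (hC : ∀ w, ‖w‖ = R → ‖g w‖ ≤ C ∧ ‖deriv g w‖ ≤ C) {z : ℂ} (hz : R ≤ ‖z‖) :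
    ‖g z‖ ≤ C * Real.exp (√K * ‖z‖ ^ (s / 2 + 1)) := by
  have hR0 : 0 ≤ R := zero_le_one.trans hR
  have hz1 : 1 ≤ ‖z‖ := hR.trans hz
  have hz0 : ‖z‖ ≠ 0 := (one_pos.trans_le hz1).ne'
  have hC0 : 0 ≤ C := (norm_nonneg _).trans (hC R (by simpa using hR0)).1
  set M := √K * ‖z‖ ^ (s / 2) with hM
  have hM1 : 1 ≤ M := one_le_mul_of_one_le_of_one_le (Real.one_le_sqrt.2 hK)
    (Real.one_le_rpow hz1 (by positivity))
  have hM2 : M ^ 2 = K * ‖z‖ ^ s := by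
    rw [mul_pow, Real.sq_sqrt (by positivity), rpow_half_sq (norm_nonneg z)]
  have hunit : ‖z / ‖z‖‖ = 1 := by simp [norm_ne_zero_iff.1 hz0]
  calc ‖g z‖ = ‖g ((‖z‖ : ℝ) * (z / ‖z‖))‖ := by rw [mul_div_cancel₀ z (ofReal_ne_zero.2 hz0)]
    _ ≤ C * Real.exp (M * (‖z‖ - R)) :=
      norm_ofReal_mul_le_of_deriv_deriv_eq hg hgq hunit hR0 hz hM1 (fun w hRw hwz => by
        rw [hM2]
        exact (hq w hRw).trans (by gcongr)) hC
    _ ≤ C * Real.exp (M * ‖z‖) := by gcongr; linarith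
    _ = C * Real.exp (√K * ‖z‖ ^ (s / 2 + 1)) := by
      rw [hM, mul_assoc, rpow_half_mul_self (norm_nonneg z) (by positivity)]

theorem exists_isBigO_exp_of_deriv_deriv_eq (hg : Differentiable ℂ g)
    (hgq : ∀ z, deriv (deriv g) z = q z * g z) (hs : 0 ≤ s)
    (hq : q =O[cobounded ℂ] fun z => ‖z‖ ^ s) :
    ∃ B, g =O[cobounded ℂ] fun z => Real.exp (B * ‖z‖ ^ (s / 2 + 1)) := by
  obtain ⟨K, hK⟩ := hq.bound
  obtain ⟨R₀, -, hR₀⟩ := hasBasis_cobounded_norm.eventually_iff.1 hK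
  set R := max R₀ 1
  have hqK : ∀ w, R ≤ ‖w‖ → ‖q w‖ ≤ max K 1 * ‖w‖ ^ s := fun w hw => by
    have hw0 := hR₀ ((le_max_left _ _).trans hw)
    rw [Real.norm_of_nonneg (by positivity)] at hw0
    exact hw0.trans (by gcongr; exact le_max_left _ _)
  obtain ⟨C, hC⟩ := (isCompact_sphere (0 : ℂ) R).exists_bound_of_continuousOn
    (hg.continuous.prodMk hg.deriv.continuous).continuousOn
  refine ⟨√(max K 1), IsBigO.of_bound C ?_⟩
  filter_upwards [tendsto_norm_cobounded_atTop.eventually_ge_atTop R] with z hz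
  rw [Real.norm_of_nonneg (Real.exp_nonneg _)]
  exact norm_le_mul_exp_rpow_of_deriv_deriv_eq hg hgq hs (le_max_right _ _) (le_max_right _ _)
    hqK (fun w hw => max_le_iff.1 (hC w (by simpa using hw))) hz

theorem norm_sq_two_mul_le_mul_exp_neg_of_deriv_deriv_eq (hg : Differentiable ℂ g)
    (hgq : ∀ z, deriv (deriv g) z = q z * g z) (hs : 0 ≤ s) {m r : ℝ} (hm : 0 ≤ m) (hr : 0 ≤ r)
    (hq : ∀ t : ℝ, r ≤ t → m * t ^ s ≤ (q t).re) (hlim : Tendsto (fun t : ℝ => g t) atTop (𝓝 0)) :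
    ‖g (2 * r : ℝ)‖ ^ 2 ≤ ‖g r‖ ^ 2 * Real.exp (-(√(2 * m) * r ^ (s / 2 + 1))) := by
  have hconvex : ∀ t ≥ r, (√(2 * m) * r ^ (s / 2)) ^ 2 * ‖g t‖ ^ 2 ≤
      2 * inner ℝ (g t) (q t * g t) := fun t ht => by
    have hqt : m * r ^ s ≤ (q t).re := (by gcongr : m * r ^ s ≤ m * t ^ s).trans (hq t ht)
    rw [inner_mul_self_right, mul_pow, Real.sq_sqrt (by positivity), rpow_half_sq hr,
      mul_assoc 2 m, mul_assoc 2]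
    gcongr
  have hdecay := norm_sq_le_mul_exp_neg_of_tendsto_zero (by positivity)
    (by linarith : r ≤ 2 * r) (fun t _ => (hg t).hasDerivAt.comp_ofReal)
    (fun t _ => hgq t ▸ (hg.deriv t).hasDerivAt.comp_ofReal) hconvex hlim
  rwa [neg_mul, mul_assoc, two_mul, add_sub_cancel_right, rpow_half_mul_self hr (by positivity),
    ← two_mul] at hdecay

theorem exists_isBigO_exp_neg_of_deriv_deriv_eq (hg : Differentiable ℂ g)
    (hgq : ∀ z, deriv (deriv g) z = q z * g z) (hs : 0 ≤ s) {m : ℝ} (hm : 0 < m)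
    (hq : ∀ᶠ r : ℝ in atTop, m * r ^ s ≤ (q r).re)
    (hlim : Tendsto (fun r : ℝ => g r) atTop (𝓝 0)) :
    ∃ c > 0, (fun r : ℝ => g r) =O[atTop] fun r => Real.exp (-(c * r ^ (s / 2 + 1))) := by
  obtain ⟨R, hR⟩ := eventually_atTop.1
    (hq.and (hlim.norm.eventually_le_const (u := 1) (by simp)))
  refine ⟨√(2 * m) * (1 / 2) ^ (s / 2 + 1) / 2, by positivity, IsBigO.of_bound 1 ?_⟩
  filter_upwards [eventually_ge_atTop (2 * max R 0)] with r hr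
  have hRr : R ≤ r / 2 := by linarith [le_max_left R 0]
  have hr0 : 0 ≤ r / 2 := by linarith [le_max_right R 0]
  have hhalf : (r / 2) ^ (s / 2 + 1) = (1 / 2) ^ (s / 2 + 1) * r ^ (s / 2 + 1) := by
    rw [← Real.mul_rpow (by norm_num) (by linarith), one_div_mul_eq_div]
  rw [one_mul, Real.norm_of_nonneg (Real.exp_nonneg _)]
  refine (pow_le_pow_iff_left₀ (norm_nonneg _) (Real.exp_nonneg _) two_ne_zero).1 ?_
  calc ‖g r‖ ^ 2 = ‖g (2 * (r / 2) : ℝ)‖ ^ 2 := by rw [mul_div_cancel₀ r two_ne_zero]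
    _ ≤ ‖g (r / 2 : ℝ)‖ ^ 2 * Real.exp (-(√(2 * m) * (r / 2) ^ (s / 2 + 1))) :=
      norm_sq_two_mul_le_mul_exp_neg_of_deriv_deriv_eq hg hgq hs hm.le hr0
        (fun t ht => (hR t (hRr.trans ht)).1) hlim
    _ ≤ 1 * Real.exp (-(√(2 * m) * (r / 2) ^ (s / 2 + 1))) := by
      gcongr
      exact pow_le_one₀ (norm_nonneg _) (hR _ hRr).2
    _ = Real.exp (-(√(2 * m) * (1 / 2) ^ (s / 2 + 1) / 2 * r ^ (s / 2 + 1))) ^ 2 := by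
      rw [one_mul, hhalf, ← Real.exp_nat_mul]
      push_cast
      ring_nf

end GrowthAndDecay

section Sector

theorem exists_norm_le_of_isBigO_one {E : Type*} [NormedAddCommGroup E] {u : ℝ → E}
    (hu : Continuous u) (hO : u =O[atTop] (1 : ℝ → ℝ)) : ∃ C, ∀ r ≥ 0, ‖u r‖ ≤ C := by
  obtain ⟨C₁, hC₁⟩ := hO.bound
  obtain ⟨T, hT⟩ := eventually_atTop.1 hC₁
  obtain ⟨C₂, hC₂⟩ := (isCompact_Icc (a := 0) (b := T)).exists_bound_of_continuousOn
    hu.continuousOn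
  refine ⟨max C₁ C₂, fun r hr => ?_⟩
  rcases le_total T r with h | h
  · exact (by simpa using hT r h : ‖u r‖ ≤ C₁).trans (le_max_left _ _)
  · exact (hC₂ r ⟨hr, h⟩).trans (le_max_right _ _)

theorem superpolynomialDecay_exp_of_isBigO_exp_neg_rpow {E : Type*} [NormedAddCommGroup E]
    {u : ℝ → E} {c p : ℝ} (hc : 0 < c) (hp : 1 < p)
    (hu : u =O[atTop] fun x => Real.exp (-(c * x ^ p))) :
    SuperpolynomialDecay atTop Real.exp fun x => ‖u x‖ := by
  intro m
  have hbot : Tendsto (fun x : ℝ => m - c * x ^ (p - 1)) atTop atBot :=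
    tendsto_atBot_add_const_left _ _ (tendsto_neg_atTop_atBot.comp
      ((tendsto_rpow_atTop (by linarith)).const_mul_atTop hc))
  have hexp : Tendsto (fun x : ℝ => Real.exp (x * (m - c * x ^ (p - 1)))) atTop (𝓝 0) :=
    Real.tendsto_exp_atBot.comp (tendsto_id.atTop_mul_atBot₀ hbot)
  refine ((isBigO_refl (fun x => Real.exp x ^ m) atTop).mul hu.norm_left).trans_tendsto
    (hexp.congr' ?_)
  filter_upwards [eventually_gt_atTop 0] with x hx
  rw [← Real.exp_nat_mul, ← Real.exp_add, Real.rpow_sub_one hx.ne']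
  congr 1
  field_simp
  ring

theorem ofReal_mul_exp_mul_I_cpow {a r θ : ℝ} (ha : a ≠ 0) (hr : 0 ≤ r)
    (hθ : θ ∈ Set.Ioc (-π) π) :
    ((r : ℂ) * exp (θ * I)) ^ (a : ℂ) = (r ^ a : ℝ) * exp ((θ * a : ℝ) * I) := by
  rcases hr.eq_or_lt with rfl | hr
  · simp [ha, Real.zero_rpow]
  · rw [cpow_ofReal, norm_mul, norm_exp_ofReal_mul_I, mul_one, norm_real,
      Real.norm_of_nonneg hr.le, exp_mul_I (θ : ℂ), arg_mul_cos_add_sin_mul_I hr hθ, exp_mul_I]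
    push_cast
    rfl

theorem tendsto_cpow_ofReal_cobounded {a : ℝ} (ha : 0 < a) :
    Tendsto (fun w : ℂ => w ^ (a : ℂ)) (cobounded ℂ) (cobounded ℂ) := by
  rw [← tendsto_norm_atTop_iff_cobounded]
  exact ((tendsto_rpow_atTop ha).comp tendsto_norm_cobounded_atTop).congr
    fun w => (norm_cpow_real w a).symm

theorem eq_zero_of_forall_pos {g : ℂ → ℂ} (hg : Differentiable ℂ g)
    (h : ∀ x : ℝ, 0 < x → g x = 0) : g = 0 := by
  have han : AnalyticOnNhd ℂ g Set.univ := hg.differentiableOn.analyticOnNhd isOpen_univ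
  have hright : Tendsto (fun x : ℝ => (x : ℂ)) (𝓝[>] 0) (𝓝[≠] 0) :=
    tendsto_nhdsWithin_iff.2 ⟨(continuous_ofReal.tendsto' 0 0 ofReal_zero).mono_left
      nhdsWithin_le_nhds, by
        filter_upwards [self_mem_nhdsWithin] with x (hx : 0 < x)
        simpa using hx.ne'⟩
  refine han.eq_of_frequently_eq (fun _ _ => analyticAt_const) (hright.frequently ?_)
  exact Eventually.frequently (eventually_mem_nhdsWithin.mono h)

theorem diffContOnCl_comp_cpow {g : ℂ → ℂ} (hg : Differentiable ℂ g) {a : ℝ} (ha : 0 < a) :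
    DiffContOnCl ℂ (fun w => g (w ^ (a : ℂ))) {w | 0 < w.re} := by
  refine ⟨fun w hw => ?_, ?_⟩
  · exact ((hg _).comp w (differentiableAt_id.cpow_const (Or.inl hw))).differentiableWithinAt
  · rw [closure_setOfPred_lt_re]
    exact fun w hw => (hg.continuous.continuousAt.comp
      (continuousAt_cpow_const_of_re_pos (Or.inl hw) (by simpa))).continuousWithinAt

theorem exists_norm_comp_cpow_mul_I_le {g : ℂ → ℂ} (hg : Continuous g) {a : ℝ} (ha : 0 < a)
    (hpos : (fun r : ℝ => g (r * exp ((π / 2 * a : ℝ) * I))) =O[atTop] (1 : ℝ → ℝ))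
    (hneg : (fun r : ℝ => g (r * exp ((-(π / 2) * a : ℝ) * I))) =O[atTop] (1 : ℝ → ℝ)) :
    ∃ C, ∀ x : ℝ, ‖g ((x * I) ^ (a : ℂ))‖ ≤ C := by
  have hcont : ∀ w : ℂ, Continuous fun r : ℝ => g (r * w) := fun w => by fun_prop
  obtain ⟨C₁, hC₁⟩ := exists_norm_le_of_isBigO_one (hcont _) hpos
  obtain ⟨C₂, hC₂⟩ := exists_norm_le_of_isBigO_one (hcont _) hneg
  have hπ := Real.pi_pos
  refine ⟨max C₁ C₂, fun x => ?_⟩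
  rcases le_total 0 x with hx | hx
  · have hxI : (x : ℂ) * I = x * exp ((π / 2 : ℝ) * I) := by
      rw [ofReal_div, ofReal_ofNat, exp_pi_div_two_mul_I]
    rw [hxI, ofReal_mul_exp_mul_I_cpow ha.ne' hx ⟨by linarith, by linarith⟩]
    exact (hC₁ _ (Real.rpow_nonneg hx a)).trans (le_max_left _ _)
  · have hxI : (x : ℂ) * I = (-x : ℝ) * exp ((-(π / 2) : ℝ) * I) := by
      rw [ofReal_neg (π / 2), ofReal_div, ofReal_ofNat, ← neg_div, exp_neg_pi_div_two_mul_I,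
        ofReal_neg, neg_mul_neg]
    rw [hxI, ofReal_mul_exp_mul_I_cpow ha.ne' (neg_nonneg.2 hx) ⟨by linarith, by linarith⟩]
    exact (hC₂ _ (Real.rpow_nonneg (neg_nonneg.2 hx) a)).trans (le_max_right _ _)

/- The map `w ↦ w ^ (2 * φ / π)` takes the right half-plane to the sector of half-opening `φ`;
there Mathlib's Phragmén–Lindelöf theorem for superexponential decay applies, because
`1 < 2 * φ / π * ν < 2`. -/
theorem eq_zero_of_bounded_on_rays_of_decay {g : ℂ → ℂ} (hg : Differentiable ℂ g) {φ ν : ℝ}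
    (hφ : 0 < φ) (hνφ : π / 2 < φ * ν) (hφν : φ * ν < π) {B c : ℝ} (hc : 0 < c)
    (hgrowth : g =O[cobounded ℂ] fun z => Real.exp (B * ‖z‖ ^ ν))
    (hdecay : (fun r : ℝ => g r) =O[atTop] fun r => Real.exp (-(c * r ^ ν)))
    (hpos : (fun r : ℝ => g (r * exp (φ * I))) =O[atTop] (1 : ℝ → ℝ))
    (hneg : (fun r : ℝ => g (r * exp ((-φ : ℝ) * I))) =O[atTop] (1 : ℝ → ℝ)) : g = 0 := by
  set a := 2 * φ / π with ha_def
  have ha : 0 < a := by positivity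
  have haφ : π / 2 * a = φ := by rw [ha_def]; field_simp
  have haν : 1 < a * ν ∧ a * ν < 2 := by
    rw [ha_def, div_mul_eq_mul_div, lt_div_iff₀ Real.pi_pos, div_lt_iff₀ Real.pi_pos]
    constructor <;> linarith
  have hcomp_growth : (fun w => g (w ^ (a : ℂ))) =O[cobounded ℂ]
      fun w => Real.exp (B * ‖w‖ ^ (a * ν)) :=
    (hgrowth.comp_tendsto (tendsto_cpow_ofReal_cobounded ha)).congr_right fun w => by
      simp only [Function.comp_apply, norm_cpow_real, Real.rpow_mul (norm_nonneg w)]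
  have hcomp_decay : (fun x : ℝ => g ((x : ℂ) ^ (a : ℂ))) =O[atTop]
      fun x => Real.exp (-(c * x ^ (a * ν))) := by
    refine (hdecay.comp_tendsto (tendsto_rpow_atTop ha)).congr' ?_ ?_ <;>
      filter_upwards [eventually_ge_atTop 0] with x hx
    · rw [Function.comp_apply, ofReal_cpow hx]
    · rw [Function.comp_apply, Real.rpow_mul hx]
  have hzero := PhragmenLindelof.eq_zero_on_right_half_plane_of_superexponential_decay
    (diffContOnCl_comp_cpow hg ha) ⟨a * ν, haν.2, B, hcomp_growth.mono inf_le_left⟩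
    (superpolynomialDecay_exp_of_isBigO_exp_neg_rpow hc haν.1 hcomp_decay)
    (exists_norm_comp_cpow_mul_I_le hg.continuous ha (by rwa [haφ]) (by rwa [neg_mul, haφ]))
  refine eq_zero_of_forall_pos hg fun x hx => ?_
  have hroot : ((x ^ a⁻¹ : ℝ) : ℂ) ^ (a : ℂ) = x := by
    rw [← ofReal_cpow (by positivity), Real.rpow_inv_rpow hx.le ha.ne']
  simpa only [hroot, Pi.zero_apply] using
    hzero (x := ((x ^ a⁻¹ : ℝ) : ℂ)) (by simpa using Real.rpow_nonneg hx.le _)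

end Sector

section Schrodinger

theorem eq_zero_of_deriv_deriv_eq_of_bounded_on_rays {g q : ℂ → ℂ} (hg : Differentiable ℂ g)
    (hgq : ∀ z, deriv (deriv g) z = q z * g z) {s m φ : ℝ} (hs : 0 ≤ s) (hm : 0 < m)
    (hq : q =O[cobounded ℂ] fun z => ‖z‖ ^ s) (hqre : ∀ᶠ r : ℝ in atTop, m * r ^ s ≤ (q r).re)
    (hφ : π < φ * (s + 2)) (hφ' : φ * (s + 2) < 2 * π)
    (hlim : Tendsto (fun r : ℝ => g r) atTop (𝓝 0))
    (hpos : (fun r : ℝ => g (r * exp (φ * I))) =O[atTop] (1 : ℝ → ℝ))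
    (hneg : (fun r : ℝ => g (r * exp ((-φ : ℝ) * I))) =O[atTop] (1 : ℝ → ℝ)) : g = 0 := by
  obtain ⟨B, hgrowth⟩ := exists_isBigO_exp_of_deriv_deriv_eq hg hgq hs hq
  obtain ⟨c, hc, hdecay⟩ := exists_isBigO_exp_neg_of_deriv_deriv_eq hg hgq hs hm hqre hlim
  have hφ0 : 0 < φ := pos_of_mul_pos_left (Real.pi_pos.trans hφ) (by positivity)
  exact eq_zero_of_bounded_on_rays_of_decay hg hφ0 (by linarith) (by linarith) hc hgrowth hdecay
    hpos hneg

theorem deriv_deriv_comp_mul_left (y : ℂ → ℂ) (e z : ℂ) :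
    deriv (deriv fun z => y (e * z)) z = e ^ 2 * deriv (deriv y) (e * z) := by
  have hderiv : (deriv fun z => y (e * z)) = fun z => e * deriv y (e * z) :=
    funext fun z => deriv_comp_mul_left e y z
  rw [hderiv, deriv_const_mul_field, deriv_comp_mul_left, smul_eq_mul, sq, mul_assoc]

theorem isEquivalent_pol_sub {d : ℕ} (hd : 1 ≤ d) (α : Fin (d - 1) → ℂ) (lam : ℂ) :
    (fun z => Pol d α z - lam) ~[cobounded ℂ] fun z => z ^ d := by
  have hsum : (fun z : ℂ => ∑ i : Fin (d - 1), α i * z ^ ((i : ℕ) + 1)) =o[cobounded ℂ]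
      fun z => z ^ d :=
    IsLittleO.fun_sum fun i _ =>
      (isLittleO_pow_pow_cobounded_of_lt (by omega)).const_mul_left (α i)
  have hconst : (fun _ : ℂ => lam) =o[cobounded ℂ] fun z => z ^ d :=
    isLittleO_const_left.2 (Or.inr (tendsto_norm_cobounded_atTop.comp
      (tendsto_pow_cobounded_cobounded (by omega))))
  exact (hsum.sub hconst).congr_left fun z => by simp only [Pol, Pi.sub_apply]; ring

variable {q y : ℂ → ℂ} {d : ℕ} {e : ℂ}

theorem isBigO_rotate_of_isEquivalent_pow (hq : q ~[cobounded ℂ] fun z => z ^ d) (he : e ≠ 0) :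
    (fun z => e ^ 2 * q (e * z)) =O[cobounded ℂ] fun z => ‖z‖ ^ (d : ℝ) := by
  have hqe : (fun z => q (e * z)) =O[cobounded ℂ] fun z => (e * z) ^ d :=
    hq.isBigO.comp_tendsto (tendsto_mul_left_cobounded he)
  refine (hqe.const_mul_left (e ^ 2)).trans (IsBigO.of_bound (‖e‖ ^ d) (.of_forall fun z => ?_))
  simp [mul_pow]

theorem eventually_le_re_rotate_of_isEquivalent_pow (hq : q ~[cobounded ℂ] fun z => z ^ d)
    (he : e ≠ 0) {m : ℝ} (hm : m < (e ^ (d + 2)).re) :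
    ∀ᶠ r : ℝ in atTop, m * r ^ (d : ℝ) ≤ (e ^ 2 * q (e * r)).re := by
  have hray : Tendsto (fun r : ℝ => e * (r : ℂ)) atTop (cobounded ℂ) :=
    (tendsto_mul_left_cobounded he).comp (RCLike.tendsto_ofReal_atTop_cobounded ℂ)
  have hratio : Tendsto (fun r : ℝ => q (e * r) / (e * r) ^ d) atTop (𝓝 1) := by
    refine ((isEquivalent_iff_tendsto_one ?_).1 hq).comp hray
    filter_upwards [tendsto_norm_cobounded_atTop.eventually_gt_atTop 0] with z hz
    exact pow_ne_zero d (norm_pos_iff.1 hz)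
  have hlim : Tendsto (fun r : ℝ => (e ^ (d + 2) * (q (e * r) / (e * r) ^ d)).re) atTop
      (𝓝 (e ^ (d + 2)).re) := by
    have hprod := hratio.const_mul (e ^ (d + 2))
    rw [mul_one] at hprod
    exact (continuous_re.tendsto _).comp hprod
  filter_upwards [hlim.eventually_const_lt hm, eventually_gt_atTop 0] with r hr hr0
  have hfactor : e ^ 2 * q (e * r) = (r ^ d : ℝ) * (e ^ (d + 2) * (q (e * r) / (e * r) ^ d)) := by
    have hr0' : (r : ℂ) ≠ 0 := ofReal_ne_zero.2 hr0.ne'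
    push_cast
    field_simp
    ring
  rw [hfactor, re_ofReal_mul, Real.rpow_natCast, mul_comm]
  gcongr

theorem dirIn_mod {n : ℕ} (hn : n ≠ 0) {j : ℕ} {θ : ℝ} (hθ : DirIn n j θ) :
    DirIn n (j % n) (θ - (j / n : ℕ) * (2 * π)) := by
  have hj : (j : ℝ) = n * (j / n : ℕ) + (j % n : ℕ) := by exact_mod_cast (Nat.div_add_mod j n).symm
  have hoffset : θ - (j / n : ℕ) * (2 * π) - 2 * π * (j % n : ℕ) / n = θ - 2 * π * j / n := by
    rw [hj]
    field_simp
    ring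
  rwa [DirIn, hoffset]

theorem Subdominant.of_mod {n : ℕ} (hn : n ≠ 0) {j : ℕ} (h : Subdominant n (j % n) y) :
    Subdominant n j y := fun θ hθ => by
  refine (h _ (dirIn_mod hn hθ)).congr fun r => ?_
  push_cast
  rw [exp_mul_I_periodic.sub_nat_mul_eq]

theorem Subdominant.tendsto_rotate {n j : ℕ} (h : Subdominant n j y) {θ φ : ℝ}
    (hθ : |θ + φ - 2 * π * j / n| < π / n) :
    Tendsto (fun r : ℝ => y (exp (θ * I) * (r * exp (φ * I)))) atTop (𝓝 0) := by
  refine (h (θ + φ) hθ).congr fun r => ?_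
  rw [ofReal_add, add_mul, exp_add, mul_left_comm]

theorem eq_zero_of_deriv_deriv_eq_of_bounded_on_rotated_rays
    (hq : q ~[cobounded ℂ] fun z => z ^ d) (hy : Differentiable ℂ y)
    (hyq : ∀ z, deriv (deriv y) z = q z * y z) (he : 0 < (e ^ (d + 2)).re) {φ : ℝ}
    (hφ : π < φ * (d + 2)) (hφ' : φ * (d + 2) < 2 * π)
    (hlim : Tendsto (fun r : ℝ => y (e * r)) atTop (𝓝 0))
    (hpos : (fun r : ℝ => y (e * (r * exp (φ * I)))) =O[atTop] (1 : ℝ → ℝ))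
    (hneg : (fun r : ℝ => y (e * (r * exp ((-φ : ℝ) * I)))) =O[atTop] (1 : ℝ → ℝ)) : y = 0 := by
  have he0 : e ≠ 0 := by
    rintro rfl
    simp at he
  have hzero : (fun z => y (e * z)) = 0 :=
    eq_zero_of_deriv_deriv_eq_of_bounded_on_rays (by fun_prop)
      (fun z => by rw [deriv_deriv_comp_mul_left, hyq, mul_assoc]) d.cast_nonneg (half_pos he)
      (isBigO_rotate_of_isEquivalent_pow hq he0)
      (eventually_le_re_rotate_of_isEquivalent_pow hq he0 (half_lt_self he)) hφ hφ' hlim hpos hneg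
  exact funext fun z => by simpa [mul_div_cancel₀ z he0] using congrFun hzero (z / e)

theorem exp_mul_I_pow_eq_exp_of_mul_eq {n j : ℕ} {θ ψ : ℝ} (h : n * θ = ψ + j * (2 * π)) :
    exp (θ * I) ^ n = exp (ψ * I) := by
  have hcast : (n : ℂ) * θ = ψ + j * (2 * π) := by exact_mod_cast h
  rw [← exp_nat_mul, ← mul_assoc, hcast]
  exact exp_mul_I_periodic.nat_mul j ψ

end Schrodinger

theorem stmt11_general {d : ℕ} {q y : ℂ → ℂ} (hq : q ~[cobounded ℂ] fun z => z ^ d)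
    (hy : Differentiable ℂ y) (hyq : ∀ z, deriv (deriv y) z = q z * y z) (hy0 : y ≠ 0) (j : ℕ) :
    ¬ (Subdominant (d + 2) j y ∧ Subdominant (d + 2) (j + 1) y) := by
  -- With `η = π / n` and `c` the central direction of `S_j`, the rays `c + η / 3 ± 7 * η / 6` lie
  -- in `S_{j+1}` and `S_j`; they bound a sector of opening `> 2 * η` whose bisector lies in `S_j`.
  rintro ⟨hj, hj'⟩
  set η := π / (d + 2 : ℕ) with hη
  have hη0 : 0 < η := by positivity
  have hηπ : η * (d + 2) = π := by rw [hη]; push_cast; field_simp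
  set c := 2 * π * j / (d + 2 : ℕ) with hc
  have hc' : 2 * π * (j + 1 : ℕ) / (d + 2 : ℕ) = c + 2 * η := by rw [hη, hc]; push_cast; ring
  have hpow : exp ((c + η / 3 : ℝ) * I) ^ (d + 2) = exp ((π / 3 : ℝ) * I) :=
    exp_mul_I_pow_eq_exp_of_mul_eq (j := j) (by rw [hη, hc]; push_cast; field_simp; ring)
  have hcentral := hj.tendsto_rotate (θ := c + η / 3) (φ := 0)
    (by rw [abs_lt]; constructor <;> linarith)
  have hleft := hj'.tendsto_rotate (θ := c + η / 3) (φ := 7 / 6 * η)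
    (by rw [hc', abs_lt]; constructor <;> linarith)
  have hright := hj.tendsto_rotate (θ := c + η / 3) (φ := -(7 / 6 * η))
    (by rw [abs_lt]; constructor <;> linarith)
  refine hy0 (eq_zero_of_deriv_deriv_eq_of_bounded_on_rotated_rays hq hy hyq ?_ ?_ ?_
    (by simpa using hcentral) (hleft.isBigO_one ℝ) (hright.isBigO_one ℝ))
  · rw [hpow, exp_ofReal_mul_I_re, Real.cos_pi_div_three]
    norm_num
  · linarith [Real.pi_pos]
  · linarith [Real.pi_pos]

theorem stmt11 (d : ℕ) (hd : 2 ≤ d) (n : ℕ) (hn : n = d + 2)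
    (α : Fin (d - 1) → ℂ) (lam : ℂ) (y : ℂ → ℂ)
    (hy : IsSol d α lam y) (hy0 : y ≠ 0) (j : ℕ) (hj : j < n) :
    ¬ (Subdominant n j y ∧ Subdominant n ((j + 1) % n) y) := by
  subst hn
  exact fun h => stmt11_general (isEquivalent_pol_sub (by omega) α lam) hy.1 hy.2 hy0 j
    ⟨h.1, h.2.of_mod (by omega)⟩
end
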